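/- Let P be a polynomial with integer coefficients of degree r ≥ 2 whose coefficient of x^(r−1) is equal to zero, and let s be a nonzero integer. For every sufficiently small ε > 0 there exists N_0 = N_0(P, s, ε) such that the following holds for all integers N ≥ N_0. Let θ be a real number with 1/1000 ≤ θ ≤ 1/20 and θ ≤ 17 − 12√2 − ε, and set M = ⌊N^θ⌋. Let β_1, β_2 be positive integer multiples of r with r ≤ β_1 < β_2 ≤ M, and let 𝒩 be an integer with N ≤ 𝒩 < 2N. Then the number of integers n satisfying 𝒩 ≤ n < 𝒩 + ⌊N/log N⌋ and N ≤ n < 2N, for which there exist integers x, x_1, x_2 with s·n! = P(x), s·(n−β_1)! = P(x_1) and s·(n−β_2)! = P(x_2), is at most N/(M^3·log N). -/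

import Mathlib

open scoped Nat Classical

/-!
Let `b = (0, β₁, β₂)`, `w = 1 / (r² n)`, and let `gⱼ = ∏_{i < bⱼ} (1 - r² i X)^(-1/r)`, which has
integer coefficients. If `s (n - bⱼ)! = P(xⱼ)` for all `j`, where `P = a xʳ + ⋯` has no term of
degree `r - 1`, then `|xⱼ|` is extremely close to `(|s/a| (n - bⱼ)!)^(1/r)`, so the integers
`yⱼ = n^(bⱼ/r) |xⱼ|` are extremely close to a common multiple of the values `gⱼ(w)`.

The pigeonhole principle yields polynomials `Aⱼ` of degree at most `2l` and small height for which
`∑ Aⱼ gⱼ` vanishes at `0` to order `5l`. As `q gⱼ' = vⱼ gⱼ` with polynomials `q` and `vⱼ`, applying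
`q d/dX` to this form `t` times gives another form `∑ Aⱼ⁽ᵗ⁾ gⱼ`. The numbers `∑ yⱼ Aⱼ⁽ᵗ⁾(w)` are
integral multiples of `(r² n)^(-2l - tM)` but smaller than that, so they vanish for `t ≤ T + 2`.
Hence the Wronskian of the `Aⱼ gⱼ`, which up to a factor without zero at `w` is a polynomial of
degree at most `6l + 3M`, vanishes at `w` to order `T + 1`. It is not identically zero, because the
differences `(vⱼ - vᵢ) / q` have nonintegral residues. So there are at most `(6l + 3M) / (T + 1)`
solutions, and the sizes permit `l ≈ (31/75) 𝒩 / r` and `T ≈ 3 M³ log N`.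
-/

namespace SmallDifference

open Polynomial Finset Filter
open scoped PowerSeries

section TwistedDerivative

variable {R S : Type*} [CommRing R] [CommRing S]

/-- The operator `A ↦ q A' + v A`; if `q g' = v g`, it sends `A` to the cofactor of `g` in
`q (A g)'`. -/
noncomputable def twistedDeriv (q v A : R[X]) : R[X] := q * derivative A + v * A

lemma map_iterate_twistedDeriv (f : R →+* S) (q v A : R[X]) (t : ℕ) :
    ((twistedDeriv q v)^[t] A).map f = (twistedDeriv (q.map f) (v.map f))^[t] (A.map f) := by
  have hsemi : Function.Semiconj (Polynomial.map f) (twistedDeriv q v)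
      (twistedDeriv (q.map f) (v.map f)) := fun A ↦ by
    simp only [twistedDeriv, Polynomial.map_add, Polynomial.map_mul, derivative_map]
  exact (hsemi.iterate_right t).eq A

lemma natDegree_iterate_twistedDeriv_le {q v A : R[X]} {L M : ℕ} (hA : A.natDegree ≤ L)
    (hq : q.natDegree ≤ M) (hv : v.natDegree ≤ M) (t : ℕ) :
    ((twistedDeriv q v)^[t] A).natDegree ≤ L + t * M := by
  induction t with
  | zero => simpa using hA
  | succ t ih =>
    rw [Function.iterate_succ_apply', twistedDeriv, Nat.succ_mul, ← add_assoc, add_comm _ M]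
    exact natDegree_add_le_of_degree_le
      (natDegree_mul_le_of_le hq ((natDegree_derivative_le _).trans (by omega)))
      (natDegree_mul_le_of_le hv ih)

end TwistedDerivative

section Residue

variable {R : Type*} [CommRing R]

/-- The point `x` is a root of `q` at which the residue `v(x) / q'(x)` of `v / q` is not an
integer; the quotient is cleared so that the definition makes sense over every ring. -/
def HasNonintegralResidue (q v : R[X]) (x : R) : Prop :=
  q.IsRoot x ∧ ∀ m : ℤ, v.eval x ≠ m * (derivative q).eval x

lemma X_sub_C_mul_derivative_pow_mul (x : R) (k : ℕ) (A : R[X]) :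
    (X - C x) * derivative ((X - C x) ^ k * A) =
      (X - C x) ^ k * (C (k : R) * A + (X - C x) * derivative A) := by
  cases k with
  | zero => simp
  | succ k =>
    simp only [derivative_mul, derivative_X_sub_C_pow, Nat.add_sub_cancel, map_natCast]
    ring

/-- A solution of `q W(A, B) + v A B = 0` would make the residue at `x` equal to
`ord_x A - ord_x B`. -/
lemma HasNonintegralResidue.mul_wronskian_add_ne_zero [IsDomain R] {q v A B : R[X]} {x : R}
    (hres : HasNonintegralResidue q v x) (hA : A ≠ 0) (hB : B ≠ 0) :
    q * wronskian A B + v * A * B ≠ 0 := by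
  intro h
  obtain ⟨q₁, hq⟩ := dvd_iff_isRoot.mpr hres.1
  obtain ⟨A₁, hA₁, hxA₁⟩ := exists_eq_pow_rootMultiplicity_mul_and_not_dvd A hA x
  obtain ⟨B₁, hB₁, hxB₁⟩ := exists_eq_pow_rootMultiplicity_mul_and_not_dvd B hB x
  set a := rootMultiplicity x A
  set b := rootMultiplicity x B
  have hdA := X_sub_C_mul_derivative_pow_mul x a A₁
  have hdB := X_sub_C_mul_derivative_pow_mul x b B₁
  rw [← hA₁] at hdA
  rw [← hB₁] at hdB
  have hfactor : (X - C x) ^ (a + b) * (q₁ * (A₁ * (C (b : R) * B₁ + (X - C x) * derivative B₁)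
      - (C (a : R) * A₁ + (X - C x) * derivative A₁) * B₁) + v * A₁ * B₁) = 0 := by
    have hsplit : q * wronskian A B + v * A * B = q₁ * (A * ((X - C x) * derivative B)
        - ((X - C x) * derivative A) * B) + v * A * B := by rw [wronskian, hq]; ring
    rw [← h, hsplit, hdA, hdB]
    conv_rhs => rw [hA₁, hB₁]
    ring
  have hcofactor := congrArg (eval x)
    ((mul_eq_zero.mp hfactor).resolve_left (pow_ne_zero _ (X_sub_C_ne_zero x)))
  have hderiv : (derivative q).eval x = q₁.eval x := by simp [hq]
  simp only [eval_add, eval_sub, eval_mul, eval_C, eval_X, sub_self, zero_mul, add_zero,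
    eval_zero] at hcofactor
  have hAB : A₁.eval x * B₁.eval x ≠ 0 :=
    mul_ne_zero (fun h₀ ↦ hxA₁ (dvd_iff_isRoot.mpr h₀)) fun h₀ ↦ hxB₁ (dvd_iff_isRoot.mpr h₀)
  refine hres.2 ((a : ℤ) - b) (mul_left_cancel₀ hAB ?_)
  rw [hderiv]
  push_cast
  linear_combination hcofactor

end Residue

section IterWronskian

variable {R ι : Type*} [CommRing R] [Fintype ι] [DecidableEq ι]

lemma natDegree_det_le {A : Matrix ι ι R[X]} {d : ι → ℕ} (hA : ∀ j i, (A j i).natDegree ≤ d i) :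
    A.det.natDegree ≤ ∑ i, d i := by
  rw [Matrix.det_apply']
  refine natDegree_sum_le_of_forall_le _ _ fun σ _ ↦ ?_
  have hsign : (((Equiv.Perm.sign σ : ℤˣ) : ℤ) : R[X]).natDegree ≤ 0 := (natDegree_intCast _).le
  refine (natDegree_mul_le_of_le hsign ((natDegree_prod_le _ _).trans
    (sum_le_sum fun i _ ↦ hA (σ i) i))).trans (by simp)

/-- The determinant of the iterates of order `a i` of the operators `twistedDeriv q (v j)` at
`A j`. If `q (g j)' = v j * g j`, then it is a Wronskian of the functions `A j * g j` for the
derivation `q d/dX`, divided by the product of the `g j`. -/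
noncomputable def iterWronskian (q : R[X]) (v A : ι → R[X]) (a : ι → ℕ) : R[X] :=
  (Matrix.of fun j i ↦ (twistedDeriv q (v j))^[a i] (A j)).det

lemma mul_derivative_iterWronskian (q : R[X]) (v A : ι → R[X]) (a : ι → ℕ) :
    q * derivative (iterWronskian q v A a) =
      ∑ i, iterWronskian q v A (Function.update a i (a i + 1))
        - (∑ j, v j) * iterWronskian q v A a := by
  simp only [iterWronskian, Matrix.det_apply', Matrix.of_apply, map_sum, mul_sum]
  rw [sum_comm, ← sum_sub_distrib]
  refine sum_congr rfl fun σ _ ↦ ?_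
  have hentry (i : ι) : q * derivative ((twistedDeriv q (v (σ i)))^[a i] (A (σ i))) =
      (twistedDeriv q (v (σ i)))^[a i + 1] (A (σ i))
        - v (σ i) * (twistedDeriv q (v (σ i)))^[a i] (A (σ i)) := by
    rw [Function.iterate_succ_apply', twistedDeriv, add_sub_cancel_right]
  have hupdate (i : ι) :
      ∏ k, (twistedDeriv q (v (σ k)))^[Function.update a i (a i + 1) k] (A (σ k)) =
        (∏ k ∈ univ.erase i, (twistedDeriv q (v (σ k)))^[a k] (A (σ k)))
          * (twistedDeriv q (v (σ i)))^[a i + 1] (A (σ i)) := by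
    rw [← prod_erase_mul _ _ (mem_univ i), Function.update_self]
    congr 1
    exact prod_congr rfl fun k hk ↦ by rw [Function.update_of_ne (ne_of_mem_erase hk)]
  have hsum : ∑ j, v j = ∑ i, v (σ i) := (Equiv.sum_comp σ v).symm
  simp only [hupdate, hsum, derivative_mul, derivative_intCast, zero_mul, zero_add,
    derivative_prod_finset, mul_sum, sum_mul]
  rw [← sum_sub_distrib]
  refine sum_congr rfl fun i _ ↦ ?_
  rw [← prod_erase_mul _ _ (mem_univ i)]
  linear_combination (((Equiv.Perm.sign σ : ℤˣ) : ℤ) : R[X]) *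
    (∏ k ∈ univ.erase i, (twistedDeriv q (v (σ k)))^[a k] (A (σ k))) * hentry i

lemma natDegree_iterWronskian_le {q : R[X]} {v A : ι → R[X]} {L M : ℕ}
    (hA : ∀ j, (A j).natDegree ≤ L) (hq : q.natDegree ≤ M) (hv : ∀ j, (v j).natDegree ≤ M)
    (a : ι → ℕ) : (iterWronskian q v A a).natDegree ≤ ∑ i, (L + a i * M) :=
  natDegree_det_le fun j i ↦ natDegree_iterate_twistedDeriv_le (hA j) hq (hv j) (a i)

/-- Jacobi's identity: a Wronskian of two Wronskians is a multiple of a third-order Wronskian. -/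
lemma mul_iterWronskian_fin_three (q : R[X]) (v A : Fin 3 → R[X]) :
    A 0 * iterWronskian q v A ![0, 1, 2] =
      q * wronskian (q * wronskian (A 0) (A 1) + (v 1 - v 0) * A 0 * A 1)
          (q * wronskian (A 0) (A 2) + (v 2 - v 0) * A 0 * A 2)
        + (v 2 - v 1) * (q * wronskian (A 0) (A 1) + (v 1 - v 0) * A 0 * A 1)
          * (q * wronskian (A 0) (A 2) + (v 2 - v 0) * A 0 * A 2) := by
  have hiterate (i : Fin 3) : (twistedDeriv q (v i))^[2] (A i) =
      q * derivative (q * derivative (A i) + v i * A i)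
        + v i * (q * derivative (A i) + v i * A i) := rfl
  simp only [iterWronskian, Matrix.det_fin_three, Matrix.of_apply, Matrix.cons_val, hiterate,
    Function.iterate_one, Function.iterate_zero_apply, twistedDeriv, wronskian, derivative_mul,
    derivative_sub, derivative_add]
  ring

lemma iterWronskian_fin_three_ne_zero [IsDomain R] {q : R[X]} {v A : Fin 3 → R[X]}
    (hres : ∀ i j, i < j → ∃ x, HasNonintegralResidue q (v j - v i) x) (hA : ∀ j, A j ≠ 0) :
    iterWronskian q v A ![0, 1, 2] ≠ 0 := by
  obtain ⟨x, hx⟩ := hres 0 1 (by decide)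
  obtain ⟨y, hy⟩ := hres 0 2 (by decide)
  obtain ⟨z, hz⟩ := hres 1 2 (by decide)
  refine right_ne_zero_of_mul (a := A 0) ?_
  rw [mul_iterWronskian_fin_three]
  exact hz.mul_wronskian_add_ne_zero (hx.mul_wronskian_add_ne_zero (hA 0) (hA 1))
    (hy.mul_wronskian_add_ne_zero (hA 0) (hA 2))

lemma X_sub_C_pow_succ_dvd_of_dvd_derivative [IsDomain R] [CharZero R] {f : R[X]} {w : R} {m : ℕ}
    (hroot : f.IsRoot w) (hdvd : (X - C w) ^ m ∣ derivative f) : (X - C w) ^ (m + 1) ∣ f := by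
  rcases eq_or_ne f 0 with rfl | hf
  · exact dvd_zero _
  have hf' : derivative f ≠ 0 := by
    intro h
    rw [eq_C_of_natDegree_eq_zero (derivative_eq_zero.mp h), IsRoot, eval_C] at hroot
    rw [eq_C_of_natDegree_eq_zero (derivative_eq_zero.mp h), hroot, C_0] at hf
    exact hf rfl
  have hmult := derivative_rootMultiplicity_of_root hroot
  have hpos := (rootMultiplicity_pos hf).mpr hroot
  rw [← le_rootMultiplicity_iff hf'] at hdvd
  rw [← le_rootMultiplicity_iff hf]
  omega

lemma eval_iterWronskian_eq_zero [IsDomain R] {q : R[X]} {v A : ι → R[X]} {w : R} {y : ι → R}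
    (hy : y ≠ 0) {a : ι → ℕ}
    (hvanish : ∀ i, ∑ j, y j * ((twistedDeriv q (v j))^[a i] (A j)).eval w = 0) :
    (iterWronskian q v A a).eval w = 0 := by
  rw [iterWronskian, ← coe_evalRingHom, RingHom.map_det]
  exact Matrix.exists_vecMul_eq_zero_iff.mp ⟨y, hy, funext hvanish⟩

lemma X_sub_C_pow_dvd_iterWronskian [IsDomain R] [CharZero R] {q : R[X]} {v A : ι → R[X]}
    {w : R} {y : ι → R} (hq : q.eval w ≠ 0) (hy : y ≠ 0) {T : ℕ}
    (hvanish : ∀ t ≤ T, ∑ j, y j * ((twistedDeriv q (v j))^[t] (A j)).eval w = 0)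
    {m : ℕ} {a : ι → ℕ} (ha : ∀ i, a i + m ≤ T) :
    (X - C w) ^ (m + 1) ∣ iterWronskian q v A a := by
  induction m generalizing a with
  | zero =>
    rw [zero_add, pow_one, dvd_iff_isRoot]
    exact eval_iterWronskian_eq_zero hy fun i ↦ hvanish _ (ha i)
  | succ m ih =>
    refine X_sub_C_pow_succ_dvd_of_dvd_derivative
      (eval_iterWronskian_eq_zero hy fun i ↦ hvanish _ ((Nat.le_add_right _ _).trans (ha i))) ?_
    refine (prime_X_sub_C w).pow_dvd_of_dvd_mul_left _ (mt dvd_iff_isRoot.mp hq) ?_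
    rw [mul_derivative_iterWronskian]
    refine dvd_sub (dvd_sum fun i _ ↦ ih fun k ↦ ?_) ((ih fun k ↦ ?_).mul_left _)
    · rcases eq_or_ne k i with rfl | hki
      · rw [Function.update_self]
        have := ha k
        omega
      · rw [Function.update_of_ne hki]
        have := ha k
        omega
    · have := ha k
      omega

lemma card_mul_le_natDegree [IsDomain R] {W : R[X]} (hW : W ≠ 0) {s : Finset R} {m : ℕ}
    (hdvd : ∀ w ∈ s, (X - C w) ^ m ∣ W) : s.card * m ≤ W.natDegree := by
  calc s.card * m = ∑ _w ∈ s, m := by rw [sum_const, smul_eq_mul]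
    _ ≤ ∑ w ∈ s, W.roots.count w := sum_le_sum fun w hw ↦ by
        rw [count_roots, le_rootMultiplicity_iff hW]
        exact hdvd w hw
    _ ≤ ∑ w ∈ s ∪ W.roots.toFinset, W.roots.count w := sum_le_sum_of_subset subset_union_left
    _ = W.roots.card := Multiset.sum_count_eq_card fun w hw ↦
        mem_union_right _ (Multiset.mem_toFinset.mpr hw)
    _ ≤ W.natDegree := card_roots' W

end IterWronskian

section RootSeries

/-- Primes dividing `r` are handled by `r ^ k`; modulo a power of any other prime, `r` is
invertible and the product becomes a product of `k` consecutive integers. -/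
lemma factorial_dvd_pow_mul_prod_one_add_mul (r k : ℕ) :
    k ! ∣ r ^ k * ∏ i ∈ range k, (1 + i * r) := by
  rw [Nat.dvd_iff_prime_pow_dvd_dvd]
  intro p v hp hv
  by_cases hpr : p ∣ r
  · have hvk : v ≤ k := by
      have := Fact.mk hp
      rw [padicValNat_dvd_iff_le (Nat.factorial_ne_zero k)] at hv
      rcases Nat.eq_zero_or_pos k with rfl | hk
      · simpa using hv
      · exact hv.trans (padicValNat_factorial_lt_of_ne_zero p hk.ne').le
    exact ((pow_dvd_pow p hvk).trans (pow_dvd_pow_of_dvd hpr k)).trans (dvd_mul_right _ _)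
  · have hcop : r.Coprime (p ^ v) := (((hp.coprime_iff_not_dvd).mpr hpr).symm).pow_right v
    obtain ⟨u, hu⟩ : ∃ u : ℕ, ((r * u : ℕ) : ZMod (p ^ v)) = 1 := by
      have : NeZero (p ^ v) := ⟨pow_ne_zero _ hp.ne_zero⟩
      refine ⟨((r : ZMod (p ^ v))⁻¹).val, ?_⟩
      rw [Nat.cast_mul, ZMod.natCast_zmod_val]
      exact ZMod.coe_mul_inv_eq_one r hcop
    have hasc : p ^ v ∣ u.ascFactorial k := hv.trans (Nat.factorial_dvd_ascFactorial u k)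
    have hprod : ((∏ i ∈ range k, (1 + i * r) : ℕ) : ZMod (p ^ v)) =
        (r : ZMod (p ^ v)) ^ k * ((∏ i ∈ range k, (u + i) : ℕ) : ZMod (p ^ v)) := by
      push_cast at hu ⊢
      rw [← card_range k, ← prod_const, card_range, ← prod_mul_distrib]
      refine prod_congr rfl fun i _ ↦ ?_
      linear_combination -hu
    apply Dvd.dvd.mul_left
    rw [← ZMod.natCast_eq_zero_iff] at hasc ⊢
    rw [Nat.ascFactorial_eq_prod_range] at hasc
    rw [hprod, hasc, mul_zero]

/-- The coefficient of `X ^ k` in the power series `(1 - r ^ 2 X) ^ (-1 / r)`; it is an integer by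
`factorial_dvd_pow_mul_prod_one_add_mul`. -/
def rootCoeff (r k : ℕ) : ℕ := (r ^ k * ∏ i ∈ range k, (1 + i * r)) / k !

lemma rootCoeff_zero (r : ℕ) : rootCoeff r 0 = 1 := by simp [rootCoeff]

lemma succ_mul_rootCoeff_succ (r k : ℕ) :
    (k + 1) * rootCoeff r (k + 1) = r * (1 + k * r) * rootCoeff r k := by
  have hmul (m : ℕ) : m ! * rootCoeff r m = r ^ m * ∏ i ∈ range m, (1 + i * r) :=
    Nat.mul_div_cancel' (factorial_dvd_pow_mul_prod_one_add_mul r m)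
  refine Nat.eq_of_mul_eq_mul_left k.factorial_pos ?_
  calc k ! * ((k + 1) * rootCoeff r (k + 1)) = (k + 1)! * rootCoeff r (k + 1) := by
        rw [Nat.factorial_succ]; ring
    _ = r * (1 + k * r) * (r ^ k * ∏ i ∈ range k, (1 + i * r)) := by
        rw [hmul, prod_range_succ]; ring
    _ = k ! * (r * (1 + k * r) * rootCoeff r k) := by rw [← hmul]; ring

lemma rootCoeff_le {r : ℕ} (hr : 1 ≤ r) (k : ℕ) : rootCoeff r k ≤ (r ^ 2) ^ k := by
  induction k with
  | zero => rw [rootCoeff_zero, pow_zero]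
  | succ k ih =>
    refine Nat.le_of_mul_le_mul_left ?_ k.succ_pos
    calc (k + 1) * rootCoeff r (k + 1) = r * (1 + k * r) * rootCoeff r k :=
          succ_mul_rootCoeff_succ r k
      _ ≤ (k + 1) * r ^ 2 * (r ^ 2) ^ k := Nat.mul_le_mul (by nlinarith) ih
      _ = (k + 1) * (r ^ 2) ^ (k + 1) := by ring

/-- The power series `(1 - r ^ 2 j X) ^ (-1 / r)`, which has integer coefficients. -/
def rootSeries (r j : ℕ) : ℤ⟦X⟧ := PowerSeries.mk fun k ↦ (rootCoeff r k : ℤ) * (j : ℤ) ^ k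

/-- The polynomial `1 - r ^ 2 j X`. -/
noncomputable def linFactor (r j : ℕ) : ℤ[X] := 1 - C ((r : ℤ) ^ 2 * j) * X

lemma coe_linFactor (r j : ℕ) :
    (linFactor r j : ℤ⟦X⟧) = 1 - PowerSeries.C ((r : ℤ) ^ 2 * j) * PowerSeries.X := by
  rw [linFactor, Polynomial.coe_sub, Polynomial.coe_mul, Polynomial.coe_one, Polynomial.coe_C,
    Polynomial.coe_X]

lemma derivative_linFactor (r j : ℕ) : derivative (linFactor r j) = -C ((r : ℤ) ^ 2 * j) := by
  simp [linFactor]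

lemma natDegree_linFactor_le (r j : ℕ) : (linFactor r j).natDegree ≤ 1 := by
  unfold linFactor
  compute_degree

lemma natDegree_prod_linFactor_le (r : ℕ) (s : Finset ℕ) :
    (∏ j ∈ s, linFactor r j).natDegree ≤ #s :=
  (natDegree_prod_le _ _).trans ((sum_le_card_nsmul _ _ 1 fun j _ ↦
    natDegree_linFactor_le r j).trans (by simp))

lemma aeval_linFactor {K : Type*} [CommRing K] (w : K) (r j : ℕ) :
    aeval w (linFactor r j) = 1 - (r : K) ^ 2 * j * w := by
  simp [linFactor]

lemma constantCoeff_rootSeries (r j : ℕ) : PowerSeries.constantCoeff (rootSeries r j) = 1 := by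
  rw [← PowerSeries.coeff_zero_eq_constantCoeff_apply]
  simp [rootSeries, rootCoeff_zero]

lemma linFactor_mul_derivative_rootSeries (r j : ℕ) :
    (linFactor r j : ℤ⟦X⟧) * d⁄dX ℤ (rootSeries r j) =
      PowerSeries.C ((r : ℤ) * j) * rootSeries r j := by
  ext k
  rw [coe_linFactor, sub_mul, one_mul, mul_assoc, map_sub, PowerSeries.coeff_C_mul,
    PowerSeries.coeff_C_mul]
  have hrec := succ_mul_rootCoeff_succ r k
  push_cast [← Nat.cast_inj (R := ℤ)] at hrec
  cases k with
  | zero =>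
    simp only [rootSeries, PowerSeries.coeff_derivative, PowerSeries.coeff_zero_X_mul,
      PowerSeries.coeff_mk]
    push_cast at hrec ⊢
    linear_combination (j : ℤ) * hrec
  | succ k =>
    simp only [rootSeries, PowerSeries.coeff_succ_X_mul, PowerSeries.coeff_derivative,
      PowerSeries.coeff_mk]
    push_cast at hrec ⊢
    linear_combination (j : ℤ) ^ (k + 1 + 1) * hrec

lemma linFactor_mul_rootSeries_pow (r j : ℕ) : (linFactor r j : ℤ⟦X⟧) * rootSeries r j ^ r = 1 := by
  apply PowerSeries.derivative.ext
  · have hode := linFactor_mul_derivative_rootSeries r j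
    have hC : PowerSeries.C ((r : ℤ) ^ 2 * j) = (r : ℤ⟦X⟧) * PowerSeries.C ((r : ℤ) * j) := by
      rw [← map_natCast PowerSeries.C, ← map_mul]
      congr 1
      ring
    rw [PowerSeries.derivative_one, Derivation.leibniz, PowerSeries.derivative_pow,
      PowerSeries.derivative_coe, smul_eq_mul, smul_eq_mul, derivative_linFactor,
      Polynomial.coe_neg, Polynomial.coe_C, hC]
    cases r with
    | zero => simp
    | succ r =>
      rw [Nat.add_sub_cancel]
      linear_combination (rootSeries (r + 1) j ^ r * ((r + 1 : ℕ) : ℤ⟦X⟧)) * hode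
  · simp [constantCoeff_rootSeries, coe_linFactor]

end RootSeries

section RootProd

/-- The power series `∏ j < b, (1 - r ^ 2 j X) ^ (-1 / r)`. -/
noncomputable def rootProd (r b : ℕ) : ℤ⟦X⟧ := ∏ j ∈ range b, rootSeries r j

/-- The polynomial `∏ j < β, (1 - r ^ 2 j X)`. -/
noncomputable def linProd (r β : ℕ) : ℤ[X] := ∏ j ∈ range β, linFactor r j

/-- The numerator of the logarithmic derivative of `rootProd r b` over the denominator
`linProd r β`; see `linProd_mul_derivative_rootProd`. -/
noncomputable def logDerivNum (r β b : ℕ) : ℤ[X] :=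
  ∑ j ∈ range b, C ((r : ℤ) * j) * ∏ i ∈ (range β).erase j, linFactor r i

lemma logDerivNum_zero (r β : ℕ) : logDerivNum r β 0 = 0 := by simp [logDerivNum]

lemma rootProd_zero (r : ℕ) : rootProd r 0 = 1 := by simp [rootProd]

lemma constantCoeff_rootProd (r b : ℕ) : PowerSeries.constantCoeff (rootProd r b) = 1 := by
  rw [rootProd, map_prod]
  exact prod_eq_one fun j _ ↦ constantCoeff_rootSeries r j

lemma linProd_mul_rootProd_pow (r b : ℕ) : (linProd r b : ℤ⟦X⟧) * rootProd r b ^ r = 1 := by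
  have hcoe : (linProd r b : ℤ⟦X⟧) = ∏ j ∈ range b, (linFactor r j : ℤ⟦X⟧) :=
    map_prod (coeToPowerSeries.ringHom (R := ℤ)) (linFactor r) (range b)
  rw [hcoe, rootProd, ← prod_pow, ← prod_mul_distrib]
  exact prod_eq_one fun j _ ↦ linFactor_mul_rootSeries_pow r j

lemma linFactor_mul_prod_erase {r β j : ℕ} (hj : j < β) :
    linFactor r j * ∏ i ∈ (range β).erase j, linFactor r i = linProd r β :=
  mul_prod_erase _ _ (mem_range.mpr hj)

lemma linProd_mul_derivative_rootProd (r : ℕ) {β b : ℕ} (hb : b ≤ β) :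
    (linProd r β : ℤ⟦X⟧) * d⁄dX ℤ (rootProd r b) = (logDerivNum r β b : ℤ⟦X⟧) * rootProd r b := by
  induction b with
  | zero => rw [logDerivNum_zero, rootProd_zero, PowerSeries.derivative_one]; simp
  | succ b ih =>
    have hprod : rootProd r (b + 1) = rootProd r b * rootSeries r b := prod_range_succ _ _
    have hnum : logDerivNum r β (b + 1) = logDerivNum r β b
        + C ((r : ℤ) * b) * ∏ i ∈ (range β).erase b, linFactor r i := sum_range_succ _ _
    have hlin := congrArg ((↑) : ℤ[X] → ℤ⟦X⟧) (linFactor_mul_prod_erase (r := r) hb)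
    rw [Polynomial.coe_mul] at hlin
    rw [hprod, hnum, Derivation.leibniz, smul_eq_mul, smul_eq_mul,
      Polynomial.coe_add, Polynomial.coe_mul, Polynomial.coe_C]
    linear_combination rootSeries r b * ih (by omega)
      - (rootProd r b * d⁄dX ℤ (rootSeries r b)) * hlin
      + rootProd r b * ((∏ i ∈ (range β).erase b, linFactor r i : ℤ[X]) : ℤ⟦X⟧)
        * linFactor_mul_derivative_rootSeries r b

lemma natDegree_linProd_le (r β : ℕ) : (linProd r β).natDegree ≤ β :=
  (natDegree_prod_linFactor_le r _).trans (card_range β).le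

lemma natDegree_logDerivNum_le (r β b : ℕ) : (logDerivNum r β b).natDegree ≤ β :=
  natDegree_sum_le_of_forall_le _ _ fun _ _ ↦ (natDegree_C_mul_le _ _).trans
    ((natDegree_prod_linFactor_le r _).trans (card_erase_le.trans (card_range β).le))

lemma aeval_linProd {K : Type*} [CommRing K] (w : K) (r β : ℕ) :
    aeval w (linProd r β) = ∏ j ∈ range β, (1 - (r : K) ^ 2 * j * w) := by
  simp only [linProd, map_prod, aeval_linFactor]

lemma derivative_linProd (r β : ℕ) :
    derivative (linProd r β) = -(r : ℤ[X]) * logDerivNum r β β := by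
  rw [linProd, derivative_prod_finset, logDerivNum, mul_sum]
  refine sum_congr rfl fun j _ ↦ ?_
  rw [derivative_linFactor, ← C_eq_natCast, pow_two, mul_assoc, C_mul]
  ring

end RootProd

section RootProdResidue

variable {K : Type*} [Field K] [CharZero K] {r x : ℕ}

lemma one_sub_sq_mul_div_eq_zero_iff (hr : 1 ≤ r) (hx : 1 ≤ x) (i : ℕ) :
    1 - (r : K) ^ 2 * i * (1 / ((r : K) ^ 2 * x)) = 0 ↔ i = x := by
  have hr₀ : (r : K) ≠ 0 := Nat.cast_ne_zero.mpr (by omega)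
  have hx₀ : (x : K) ≠ 0 := Nat.cast_ne_zero.mpr (by omega)
  rw [sub_eq_zero, mul_one_div, eq_comm, div_eq_one_iff_eq (by positivity),
    mul_right_inj' (pow_ne_zero 2 hr₀), Nat.cast_inj]

lemma aeval_prod_erase_linFactor_eq_zero_iff (hr : 1 ≤ r) (hx : 1 ≤ x) {β : ℕ} (hxβ : x < β)
    (j : ℕ) :
    aeval (1 / ((r : K) ^ 2 * x)) (∏ i ∈ (range β).erase j, linFactor r i) = 0 ↔ j ≠ x := by
  simp only [map_prod, aeval_linFactor, prod_eq_zero_iff, mem_erase, mem_range,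
    one_sub_sq_mul_div_eq_zero_iff hr hx]
  exact ⟨fun ⟨i, ⟨hij, _⟩, hi⟩ ↦ fun h ↦ hij (hi.trans h.symm), fun h ↦ ⟨x, ⟨h.symm, hxβ⟩, rfl⟩⟩

lemma aeval_logDerivNum (hr : 1 ≤ r) (hx : 1 ≤ x) {β : ℕ} (hxβ : x < β) (b : ℕ) :
    aeval (1 / ((r : K) ^ 2 * x)) (logDerivNum r β b) = if x < b then
      (r : K) * x * aeval (1 / ((r : K) ^ 2 * x)) (∏ i ∈ (range β).erase x, linFactor r i)
      else 0 := by
  have hvanish {j : ℕ} (hj : j ≠ x) :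
      aeval (1 / ((r : K) ^ 2 * x)) (C ((r : ℤ) * j) * ∏ i ∈ (range β).erase j, linFactor r i)
        = 0 := by
    rw [map_mul, (aeval_prod_erase_linFactor_eq_zero_iff hr hx hxβ j).mpr hj, mul_zero]
  rw [logDerivNum, map_sum]
  split_ifs with hxb
  · rw [sum_eq_single x (fun _ _ hj ↦ hvanish hj) fun h ↦ absurd (mem_range.mpr hxb) h, map_mul]
    simp
  · exact sum_eq_zero fun j hj ↦ hvanish (by rw [mem_range] at hj; omega)

/-- At `X = 1 / (r ^ 2 x)` the residue of `d log (rootProd r c / rootProd r b)` is `-1 / r`. -/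
lemma hasNonintegralResidue_logDerivNum (hr : 2 ≤ r) (hx : 1 ≤ x) {b c β : ℕ} (hbx : b ≤ x)
    (hxc : x < c) (hcβ : c ≤ β) :
    HasNonintegralResidue ((linProd r β).map (algebraMap ℤ K))
      ((logDerivNum r β c).map (algebraMap ℤ K) - (logDerivNum r β b).map (algebraMap ℤ K))
      (1 / ((r : K) ^ 2 * x)) := by
  have hr₁ : 1 ≤ r := by omega
  have hxβ : x < β := by omega
  refine ⟨?_, fun m hm ↦ ?_⟩
  · rw [IsRoot, eval_map_algebraMap, aeval_linProd, prod_eq_zero_iff]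
    exact ⟨x, mem_range.mpr hxβ, (one_sub_sq_mul_div_eq_zero_iff hr₁ hx x).mpr rfl⟩
  · have hE : aeval (1 / ((r : K) ^ 2 * x)) (∏ i ∈ (range β).erase x, linFactor r i) ≠ 0 :=
      fun h ↦ (aeval_prod_erase_linFactor_eq_zero_iff hr₁ hx hxβ x).mp h rfl
    rw [derivative_map, derivative_linProd, eval_sub] at hm
    simp only [eval_map_algebraMap, map_mul, map_neg, map_natCast,
      aeval_logDerivNum hr₁ hx hxβ, if_pos hxc, if_pos hxβ, if_neg hbx.not_gt, sub_zero] at hm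
    have hr₀ : (r : K) ≠ 0 := Nat.cast_ne_zero.mpr (by omega)
    have hx₀ : (x : K) ≠ 0 := Nat.cast_ne_zero.mpr (by omega)
    have hunit : (1 : K) = ((r * -m : ℤ) : K) := by
      refine mul_left_cancel₀ (mul_ne_zero (mul_ne_zero hr₀ hx₀) hE) ?_
      push_cast
      linear_combination hm
    have hdvd : (r : ℤ) ∣ 1 := ⟨-m, by exact_mod_cast hunit⟩
    have := Int.le_of_dvd one_pos hdvd
    omega

lemma exists_hasNonintegralResidue_logDerivNum (hr : 2 ≤ r) {b c β : ℕ} (hbc : b < c)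
    (hc : 2 ≤ c) (hcβ : c ≤ β) :
    ∃ x, HasNonintegralResidue ((linProd r β).map (algebraMap ℤ K))
      ((logDerivNum r β c).map (algebraMap ℤ K) - (logDerivNum r β b).map (algebraMap ℤ K)) x :=
  ⟨_, hasNonintegralResidue_logDerivNum hr (le_max_left 1 b) (le_max_right 1 b)
    (max_lt hc hbc) hcβ⟩

end RootProdResidue

section HighOrder

variable {R : Type*} [CommRing R]

lemma X_pow_dvd_derivative {S : ℕ} {f : R⟦X⟧} (hf : PowerSeries.X ^ S ∣ f) :
    PowerSeries.X ^ (S - 1) ∣ d⁄dX R f := by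
  rw [PowerSeries.X_pow_dvd_iff] at hf ⊢
  intro m hm
  rw [PowerSeries.coeff_derivative, hf (m + 1) (by omega), zero_mul]

lemma eq_zero_of_X_pow_dvd_coe {S : ℕ} {A : R[X]} (hdvd : PowerSeries.X ^ S ∣ (A : R⟦X⟧))
    (hdeg : A.natDegree < S) : A = 0 := by
  rw [PowerSeries.X_pow_dvd_iff] at hdvd
  ext k
  rcases lt_or_ge k S with hk | hk
  · rw [← coeff_coe, hdvd k hk, coeff_zero]
  · rw [coeff_eq_zero_of_natDegree_lt (hdeg.trans_le hk), coeff_zero]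

lemma eq_zero_of_X_pow_dvd_coe_mul {S : ℕ} {A : R[X]} {h : R⟦X⟧} (hh : IsUnit h)
    (hdvd : PowerSeries.X ^ S ∣ (A : R⟦X⟧) * h) (hdeg : A.natDegree < S) : A = 0 :=
  eq_zero_of_X_pow_dvd_coe (hh.dvd_mul_right.mp hdvd) hdeg

/-- The left side, times `g h`, is the Wronskian of `U g` and `V h`, hence that of `U g` and the
form `U g + V h`. -/
lemma mul_wronskian_add_eq_zero_of_X_pow_dvd {q u v U V : R[X]} {g h : R⟦X⟧}
    (hg : (q : R⟦X⟧) * d⁄dX R g = u * g) (hh : (q : R⟦X⟧) * d⁄dX R h = v * h)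
    (hg₁ : IsUnit g) (hh₁ : IsUnit h) {L M S : ℕ} (hU : U.natDegree ≤ L) (hV : V.natDegree ≤ L)
    (hq : q.natDegree ≤ M) (hu : u.natDegree ≤ M) (hv : v.natDegree ≤ M) (hS : 2 * L + M + 1 < S)
    (hord : PowerSeries.X ^ S ∣ (U : R⟦X⟧) * g + (V : R⟦X⟧) * h) :
    q * wronskian U V + (v - u) * U * V = 0 := by
  refine eq_zero_of_X_pow_dvd_coe_mul (S := S - 1) (hg₁.mul hh₁) ?_ ?_
  · set F := (U : R⟦X⟧) * g + (V : R⟦X⟧) * h with hF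
    have hwronskian : ((q * wronskian U V + (v - u) * U * V : R[X]) : R⟦X⟧) * (g * h) =
        U * g * (q * d⁄dX R F) - F * (q * d⁄dX R (U * g)) := by
      rw [hF, wronskian]
      simp only [Polynomial.coe_add, Polynomial.coe_mul, Polynomial.coe_sub, map_add,
        Derivation.leibniz, PowerSeries.derivative_coe, smul_eq_mul]
      linear_combination (V * h * U : R⟦X⟧) * hg - (U * g * V : R⟦X⟧) * hh
    rw [hwronskian]
    exact dvd_sub (((X_pow_dvd_derivative hord).mul_left _).mul_left _)
      (((pow_dvd_pow _ (Nat.sub_le S 1)).trans hord).mul_right _)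
  · have hdU := natDegree_derivative_le U
    have hdV := natDegree_derivative_le V
    have hwronskian : (wronskian U V).natDegree ≤ L + L :=
      natDegree_sub_le_of_le (natDegree_mul_le_of_le hU (by omega))
        (natDegree_mul_le_of_le (by omega) hV) |>.trans (max_self _).le
    have hdeg : (q * wronskian U V + (v - u) * U * V).natDegree ≤ M + (L + L) :=
      natDegree_add_le_of_degree_le (natDegree_mul_le_of_le hq hwronskian)
        ((natDegree_mul_le_of_le (natDegree_mul_le_of_le
          ((natDegree_sub_le_of_le hv hu).trans (max_self M).le) hU) hV).trans (by omega))
    omega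

lemma eq_zero_or_eq_zero_of_X_pow_dvd {K : Type*} [CommRing K] [IsDomain K] [Algebra R K]
    [FaithfulSMul R K] {q u v U V : R[X]} {g h : R⟦X⟧}
    (hg : (q : R⟦X⟧) * d⁄dX R g = u * g) (hh : (q : R⟦X⟧) * d⁄dX R h = v * h)
    (hg₁ : IsUnit g) (hh₁ : IsUnit h) {x : K}
    (hres : HasNonintegralResidue (q.map (algebraMap R K))
      (v.map (algebraMap R K) - u.map (algebraMap R K)) x)
    {L M S : ℕ} (hU : U.natDegree ≤ L) (hV : V.natDegree ≤ L) (hq : q.natDegree ≤ M)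
    (hu : u.natDegree ≤ M) (hv : v.natDegree ≤ M) (hS : 2 * L + M + 1 < S)
    (hord : PowerSeries.X ^ S ∣ (U : R⟦X⟧) * g + (V : R⟦X⟧) * h) : U = 0 ∨ V = 0 := by
  have hinj : Function.Injective (algebraMap R K) := FaithfulSMul.algebraMap_injective R K
  by_contra! hne
  refine hres.mul_wronskian_add_ne_zero ((Polynomial.map_ne_zero_iff hinj).mpr hne.1)
    ((Polynomial.map_ne_zero_iff hinj).mpr hne.2) ?_
  have hmap := congrArg (Polynomial.map (algebraMap R K))
    (mul_wronskian_add_eq_zero_of_X_pow_dvd hg hh hg₁ hh₁ hU hV hq hu hv hS hord)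
  simpa only [wronskian, Polynomial.map_add, Polynomial.map_mul, Polynomial.map_sub,
    derivative_map, Polynomial.map_zero] using hmap

lemma ne_zero_of_X_pow_dvd_sum {K : Type*} [CommRing K] [IsDomain K] [Algebra R K]
    [FaithfulSMul R K] {q : R[X]} {v A : Fin 3 → R[X]} {g : Fin 3 → R⟦X⟧}
    (hg : ∀ j, (q : R⟦X⟧) * d⁄dX R (g j) = v j * g j) (hunit : ∀ j, IsUnit (g j))
    (hres : ∀ i j, i < j → ∃ x : K, HasNonintegralResidue (q.map (algebraMap R K))
      ((v j).map (algebraMap R K) - (v i).map (algebraMap R K)) x)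
    {L M S : ℕ} (hA : ∀ j, (A j).natDegree ≤ L) (hq : q.natDegree ≤ M)
    (hv : ∀ j, (v j).natDegree ≤ M) (hS : 2 * L + M + 1 < S)
    (hord : PowerSeries.X ^ S ∣ ∑ j, (A j : R⟦X⟧) * g j) (hA₀ : A ≠ 0) (j : Fin 3) : A j ≠ 0 := by
  have hsingle {k : Fin 3} (hk : ∀ l ≠ k, A l = 0) : A k = 0 := by
    refine eq_zero_of_X_pow_dvd_coe_mul (S := S) (hunit k) ?_ ((hA k).trans_lt (by omega))
    rwa [sum_eq_single k (fun l _ hl ↦ by rw [hk l hl, Polynomial.coe_zero, zero_mul])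
      fun h ↦ absurd (mem_univ k) h] at hord
  have hothers : ∀ j : Fin 3, ∃ i k, i < k ∧ i ≠ j ∧ k ≠ j ∧ ∀ l, l ≠ i → l ≠ k → l = j := by
    decide
  intro hj
  obtain ⟨i, k, hik, hij, hkj, hrest⟩ := hothers j
  rw [Fintype.sum_eq_add i k hik.ne fun l hl ↦ by
    rw [hrest l hl.1 hl.2, hj, Polynomial.coe_zero, zero_mul]] at hord
  obtain ⟨x, hx⟩ := hres i k hik
  have hall : A i = 0 ∧ A k = 0 := by
    rcases eq_zero_or_eq_zero_of_X_pow_dvd (hg i) (hg k) (hunit i) (hunit k) hx (hA i) (hA k) hq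
      (hv i) (hv k) hS hord with h | h
    · exact ⟨h, hsingle fun l hl ↦ (eq_or_ne l i).elim (· ▸ h) fun hli ↦ hrest l hli hl ▸ hj⟩
    · exact ⟨hsingle fun l hl ↦ (eq_or_ne l k).elim (· ▸ h) fun hlk ↦ hrest l hl hlk ▸ hj, h⟩
  refine hA₀ (funext fun l ↦ ?_)
  by_cases hli : l = i
  · exact hli ▸ hall.1
  · exact (eq_or_ne l k).elim (· ▸ hall.2) fun hlk ↦ hrest l hli hlk ▸ hj

end HighOrder

section Siegel

/-- Siegel's lemma by the pigeonhole principle, with a separate bound `V k` for each equation;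
Mathlib's version in terms of the largest coefficient would be too weak below. -/
lemma exists_ne_zero_int_vec {ι κ : Type*} [Fintype ι] [Fintype κ] {E : κ → ι → ℕ} {V : κ → ℕ}
    {H : ℕ} (hH : 0 < H) (hV : ∀ k, 0 < V k) (hE : ∀ k, ∑ i, E k i ≤ V k)
    (hcard : ∏ k, (V k * H) < H ^ Fintype.card ι) :
    ∃ d : ι → ℤ, d ≠ 0 ∧ (∀ i, |d i| < H) ∧ ∀ k, ∑ i, (E k i : ℤ) * d i = 0 := by
  have hmaps : ∀ a ∈ Fintype.piFinset fun _ : ι ↦ range H,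
      (fun k ↦ ∑ i, E k i * a i) ∈ Fintype.piFinset fun k ↦ range (V k * H) := by
    intro a ha
    simp only [Fintype.mem_piFinset, mem_range] at ha ⊢
    intro k
    calc ∑ i, E k i * a i ≤ ∑ i, E k i * (H - 1) :=
          sum_le_sum fun i _ ↦ Nat.mul_le_mul_left _ (Nat.le_sub_one_of_lt (ha i))
      _ = (∑ i, E k i) * (H - 1) := (sum_mul _ _ _).symm
      _ ≤ V k * (H - 1) := Nat.mul_le_mul_right _ (hE k)
      _ < V k * H := Nat.mul_lt_mul_of_pos_left (by omega) (hV k)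
  obtain ⟨a, ha, b, hb, hab, hF⟩ := exists_ne_map_eq_of_card_lt_of_maps_to
    (by simpa [Fintype.card_piFinset] using hcard) hmaps
  simp only [Fintype.mem_piFinset, mem_range] at ha hb
  refine ⟨fun i ↦ (a i : ℤ) - b i, fun h ↦ hab (funext fun i ↦ ?_), fun i ↦ ?_, fun k ↦ ?_⟩
  · exact_mod_cast sub_eq_zero.mp (congrFun h i)
  · have := ha i
    have := hb i
    grind
  · simp only [mul_sub, sum_sub_distrib]
    rw [sub_eq_zero]
    exact_mod_cast congrFun hF k

lemma coeff_coe_ofFn_mul {n : ℕ} (d : Fin n → ℤ) (g : ℤ⟦X⟧) (k : ℕ) :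
    PowerSeries.coeff k ((ofFn n d : ℤ⟦X⟧) * g) =
      ∑ i : Fin n, PowerSeries.coeff k (PowerSeries.X ^ (i : ℕ) * g) * d i := by
  have hcoe : (ofFn n d : ℤ⟦X⟧) = ∑ i : Fin n, ((monomial (i : ℕ) (d i) : ℤ[X]) : ℤ⟦X⟧) := by
    rw [ofFn_eq_sum_monomial]
    exact map_sum (coeToPowerSeries.ringHom (R := ℤ)) (fun i : Fin n ↦ monomial (i : ℕ) (d i)) univ
  rw [hcoe, sum_mul, map_sum]
  refine sum_congr rfl fun i _ ↦ ?_
  rw [← C_mul_X_pow_eq_monomial, Polynomial.coe_mul, Polynomial.coe_C, Polynomial.coe_pow,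
    Polynomial.coe_X, mul_assoc, PowerSeries.coeff_C_mul, mul_comm]

lemma exists_X_pow_dvd_sum {ι : Type*} [Fintype ι] [Nonempty ι] {g : ι → ℤ⟦X⟧} {b Q n S H : ℕ}
    (hb : 1 ≤ b) (hQ : 1 ≤ Q) (hH : 0 < H) (hg₀ : ∀ j k, 0 ≤ PowerSeries.coeff k (g j))
    (hg : ∀ j k, PowerSeries.coeff k (g j) ≤ (b * Q ^ k : ℕ))
    (hcard : ∏ k ∈ range S, (Fintype.card ι * (n + 1) * b * Q ^ k * H) <
      H ^ (Fintype.card ι * (n + 1))) :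
    ∃ A : ι → ℤ[X], A ≠ 0 ∧ (∀ j k, |(A j).coeff k| < H) ∧ (∀ j, (A j).natDegree ≤ n) ∧
      PowerSeries.X ^ S ∣ ∑ j, (A j : ℤ⟦X⟧) * g j := by
  have hshift (j : ι) (k i : ℕ) : 0 ≤ PowerSeries.coeff k (PowerSeries.X ^ i * g j) ∧
      PowerSeries.coeff k (PowerSeries.X ^ i * g j) ≤ ((b * Q ^ k : ℕ) : ℤ) := by
    rw [PowerSeries.coeff_X_pow_mul']
    split_ifs
    · refine ⟨hg₀ j _, (hg j _).trans ?_⟩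
      exact_mod_cast Nat.mul_le_mul_left b (Nat.pow_le_pow_right hQ (Nat.sub_le k i))
    · exact ⟨le_rfl, Int.natCast_nonneg _⟩
  obtain ⟨d, hd₀, hdH, hd⟩ := exists_ne_zero_int_vec (ι := ι × Fin (n + 1)) (κ := Fin S)
    (E := fun k p ↦ (PowerSeries.coeff k.1 (PowerSeries.X ^ p.2.1 * g p.1)).toNat)
    (V := fun k ↦ Fintype.card ι * (n + 1) * b * Q ^ (k : ℕ)) hH
    (fun k ↦ Nat.mul_pos (Nat.mul_pos (Nat.mul_pos Fintype.card_pos n.succ_pos) hb)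
      (Nat.pow_pos hQ))
    (fun k ↦ (sum_le_card_nsmul _ _ (b * Q ^ (k : ℕ)) fun p _ ↦
      Int.toNat_le.mpr (hshift p.1 k p.2).2).trans (by simp [mul_assoc]))
    (by rw [Fintype.card_prod, Fintype.card_fin, ← prod_range fun k ↦
      Fintype.card ι * (n + 1) * b * Q ^ k * H]; exact hcard)
  refine ⟨fun j ↦ ofFn (n + 1) fun i ↦ d (j, i), fun h ↦ hd₀ ?_, fun j k ↦ ?_,
    fun j ↦ Nat.lt_succ_iff.mp (ofFn_natDegree_lt (by omega) _), ?_⟩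
  · ext ⟨j, i⟩
    simpa using congrFun (injective_ofFn (n + 1) ((congrFun h j).trans (ofFn_zero _).symm)) i
  · rcases lt_or_ge k (n + 1) with hk | hk
    · rw [ofFn_coeff_eq_val_of_lt _ hk]
      exact hdH _
    · rw [ofFn_coeff_eq_zero_of_ge _ hk]
      simpa using hH
  · rw [PowerSeries.X_pow_dvd_iff]
    intro k hk
    have hdk := hd ⟨k, hk⟩
    rw [Fintype.sum_prod_type] at hdk
    simp only [Int.toNat_of_nonneg (hshift _ _ _).1] at hdk
    rw [map_sum, ← hdk]
    exact sum_congr rfl fun j _ ↦ coeff_coe_ofFn_mul _ _ _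

/-- The height of the auxiliary polynomials that the pigeonhole principle provides. -/
def height (r M l : ℕ) : ℕ := (3 * (2 * l + 1) * 2 ^ M) ^ 5 * (2 * r ^ 2 * M) ^ (13 * l)

lemma height_pos {r M : ℕ} (hr : 1 ≤ r) (hM : 1 ≤ M) (l : ℕ) : 0 < height r M l := by
  unfold height
  positivity

lemma prod_mul_pow_mul_lt {G Q l H : ℕ} (hG : 2 ≤ G) (hQ : 1 ≤ Q)
    (hH : H = G ^ 5 * Q ^ (13 * l)) :
    ∏ k ∈ range (5 * l), (G * Q ^ k * H) < H ^ (3 * (2 * l + 1)) := by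
  have hH₁ : 1 < H := by
    rw [hH]
    exact (Nat.one_lt_pow (by norm_num) hG).trans_le (Nat.le_mul_of_pos_right _ (Nat.pow_pos hQ))
  have hsum : ∑ k ∈ range (5 * l), k ≤ 13 * l * l := by
    have := sum_range_id_mul_two (5 * l)
    have : 5 * l * (5 * l - 1) ≤ 5 * l * (5 * l) := Nat.mul_le_mul_left _ (by omega)
    nlinarith
  calc ∏ k ∈ range (5 * l), (G * Q ^ k * H)
      = (G * H) ^ (5 * l) * Q ^ ∑ k ∈ range (5 * l), k := by
        rw [← prod_pow_eq_pow_sum, ← card_range (5 * l), ← prod_const, card_range,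
          ← prod_mul_distrib]
        exact prod_congr rfl fun k _ ↦ by ring
    _ ≤ (G * H) ^ (5 * l) * Q ^ (13 * l * l) := by gcongr
    _ = H ^ (5 * l) * (G ^ 5 * Q ^ (13 * l)) ^ l := by
        rw [mul_pow, mul_pow, ← pow_mul, ← pow_mul]
        ring
    _ = H ^ (6 * l) := by rw [← hH, ← pow_add]; congr 1; ring
    _ < H ^ (3 * (2 * l + 1)) := Nat.pow_lt_pow_right hH₁ (by omega)

end Siegel

section CoeffBounds

lemma norm_coeff_mul_le {R : Type*} [SeminormedRing R] {f g : R⟦X⟧} {a b Q : ℝ} (hQ : 0 ≤ Q)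
    (hf : ∀ k, ‖PowerSeries.coeff k f‖ ≤ a * (Q / 2) ^ k)
    (hg : ∀ k, ‖PowerSeries.coeff k g‖ ≤ b * Q ^ k) (k : ℕ) :
    ‖PowerSeries.coeff k (f * g)‖ ≤ 2 * a * b * Q ^ k := by
  have ha : 0 ≤ a := by simpa using (norm_nonneg _).trans (hf 0)
  have hb : 0 ≤ b := by simpa using (norm_nonneg _).trans (hg 0)
  calc ‖PowerSeries.coeff k (f * g)‖
      ≤ ∑ p ∈ antidiagonal k, a * b * Q ^ k * (1 / 2) ^ p.1 := by
        rw [PowerSeries.coeff_mul]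
        refine norm_sum_le_of_le _ fun p hp ↦ ?_
        refine (norm_mul_le_of_le (hf p.1) (hg p.2)).trans_eq ?_
        rw [← mem_antidiagonal.mp hp, pow_add, div_pow, div_pow, one_pow]
        ring
    _ = a * b * Q ^ k * ∑ i ∈ range (k + 1), (1 / 2 : ℝ) ^ i := by
        rw [← mul_sum, Nat.sum_antidiagonal_eq_sum_range_succ_mk]
    _ ≤ a * b * Q ^ k * 2 := by gcongr; exact sum_geometric_two_le _
    _ = 2 * a * b * Q ^ k := by ring

lemma coeff_rootProd_nonneg (r b k : ℕ) : 0 ≤ PowerSeries.coeff k (rootProd r b) := by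
  induction b generalizing k with
  | zero => rw [rootProd_zero, PowerSeries.coeff_one]; split_ifs <;> simp
  | succ b ih =>
    rw [rootProd, prod_range_succ, PowerSeries.coeff_mul]
    refine sum_nonneg fun p _ ↦ mul_nonneg (ih _) ?_
    simp only [rootSeries, PowerSeries.coeff_mk]
    positivity

lemma norm_coeff_rootSeries_le {r j M : ℕ} (hr : 1 ≤ r) (hj : j ≤ M) (k : ℕ) :
    ‖PowerSeries.coeff k (rootSeries r j)‖ ≤ ((r : ℝ) ^ 2 * M) ^ k := by
  rw [rootSeries, PowerSeries.coeff_mk, norm_mul, norm_pow, norm_natCast, norm_natCast, mul_pow]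
  gcongr
  exact_mod_cast rootCoeff_le hr k

lemma norm_coeff_rootProd_le {r b M : ℕ} (hr : 1 ≤ r) (hb : b ≤ M) (k : ℕ) :
    ‖PowerSeries.coeff k (rootProd r b)‖ ≤ 2 ^ b * (2 * (r : ℝ) ^ 2 * M) ^ k := by
  induction b generalizing k with
  | zero =>
    rw [rootProd_zero, PowerSeries.coeff_one]
    split_ifs with h
    · simp [h]
    · simpa using pow_nonneg (by positivity) k
  | succ b ih =>
    have hprod : rootProd r (b + 1) = rootSeries r b * rootProd r b :=
      (prod_range_succ _ _).trans (mul_comm _ _)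
    rw [hprod]
    refine (norm_coeff_mul_le (a := 1) (by positivity) (fun k ↦ ?_) (ih (by omega)) k).trans_eq
      (by ring)
    refine (norm_coeff_rootSeries_le hr (show b ≤ M by omega) k).trans_eq ?_
    rw [one_mul]
    congr 1
    ring

end CoeffBounds

section GrowthBound

variable {R : Type*} [NormedCommRing R] {Q b c : ℝ} {t : ℕ} {f g : R⟦X⟧}

/-- The coefficients of `f` grow no faster than those of `b` times the `t`-th derivative of the
geometric series of ratio `Q` (up to a power of `Q`). -/
def GrowthBound (Q : ℝ) (t : ℕ) (b : ℝ) (f : R⟦X⟧) : Prop :=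
  ∀ k, ‖PowerSeries.coeff k f‖ ≤ b * (k + 1).ascFactorial t * Q ^ k

lemma growthBound_zero_iff :
    GrowthBound Q 0 b f ↔ ∀ k, ‖PowerSeries.coeff k f‖ ≤ b * Q ^ k := by
  simp [GrowthBound]

lemma GrowthBound.nonneg (h : GrowthBound Q t b f) : 0 ≤ b := by
  have h₀ := (norm_nonneg _).trans (h 0)
  rw [pow_zero, mul_one] at h₀
  exact nonneg_of_mul_nonneg_left h₀ (Nat.cast_pos.mpr (Nat.ascFactorial_pos 0 t))

lemma GrowthBound.mono (hQ : 0 ≤ Q) (h : GrowthBound Q t b f) (hbc : b ≤ c) :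
    GrowthBound Q t c f := fun k ↦ (h k).trans (by gcongr)

lemma GrowthBound.succ (hQ : 0 ≤ Q) (h : GrowthBound Q t b f) : GrowthBound Q (t + 1) b f := by
  have hb := h.nonneg
  refine fun k ↦ (h k).trans ?_
  rw [Nat.ascFactorial_succ]
  gcongr
  exact Nat.le_mul_of_pos_left _ (by omega)

lemma GrowthBound.add (hf : GrowthBound Q t b f) (hg : GrowthBound Q t c g) :
    GrowthBound Q t (b + c) (f + g) := fun k ↦ by
  rw [map_add, add_mul, add_mul]
  exact norm_add_le_of_le (hf k) (hg k)

lemma GrowthBound.sub (hf : GrowthBound Q t b f) (hg : GrowthBound Q t c g) :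
    GrowthBound Q t (b + c) (f - g) := fun k ↦ by
  rw [map_sub, add_mul, add_mul]
  exact norm_sub_le_of_le (hf k) (hg k)

lemma GrowthBound.sum {ι : Type*} {s : Finset ι} {b : ι → ℝ} {f : ι → R⟦X⟧}
    (h : ∀ j ∈ s, GrowthBound Q t (b j) (f j)) :
    GrowthBound Q t (∑ j ∈ s, b j) (∑ j ∈ s, f j) := fun k ↦ by
  rw [map_sum, sum_mul, sum_mul]
  exact norm_sum_le_of_le _ fun j hj ↦ h j hj k

lemma GrowthBound.C_mul (h : GrowthBound Q t b f) (z : R) :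
    GrowthBound Q t (‖z‖ * b) (PowerSeries.C z * f) := fun k ↦ by
  rw [PowerSeries.coeff_C_mul, mul_assoc, mul_assoc, ← mul_assoc b]
  exact norm_mul_le_of_le le_rfl (h k)

lemma GrowthBound.C_mul_X_mul {z : R} (hz : ‖z‖ ≤ Q) (h : GrowthBound Q t b f) :
    GrowthBound Q t b (PowerSeries.C z * (PowerSeries.X * f)) := by
  have hQ : 0 ≤ Q := (norm_nonneg z).trans hz
  have hb := h.nonneg
  intro k
  rw [PowerSeries.coeff_C_mul]
  cases k with
  | zero =>
    rw [PowerSeries.coeff_zero_X_mul, mul_zero, norm_zero]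
    positivity
  | succ k =>
    have hmono : (k + 1).ascFactorial t ≤ (k + 1 + 1).ascFactorial t := by
      simp only [Nat.ascFactorial_eq_prod_range]
      gcongr
      omega
    rw [PowerSeries.coeff_succ_X_mul]
    calc ‖z * PowerSeries.coeff k f‖ ≤ Q * (b * (k + 1).ascFactorial t * Q ^ k) :=
          norm_mul_le_of_le hz (h k)
      _ ≤ Q * (b * (k + 1 + 1).ascFactorial t * Q ^ k) := by gcongr
      _ = b * (k + 1 + 1).ascFactorial t * Q ^ (k + 1) := by ring

lemma GrowthBound.derivative [NormOneClass R] (h : GrowthBound Q t b f) :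
    GrowthBound Q (t + 1) (Q * b) (d⁄dX R f) := fun k ↦ by
  have hasc : (((k + 1).ascFactorial (t + 1) : ℕ) : ℝ) =
      (k + 1 + 1).ascFactorial t * ((k + 1 : ℕ) : ℝ) := by
    rw [Nat.ascFactorial_succ, ← Nat.succ_ascFactorial]
    push_cast
    ring
  rw [PowerSeries.coeff_derivative, hasc]
  calc ‖PowerSeries.coeff (k + 1) f * (k + 1)‖
      ≤ b * (k + 1 + 1).ascFactorial t * Q ^ (k + 1) * (k + 1 : ℕ) :=
        norm_mul_le_of_le (h (k + 1)) (by simpa using Nat.norm_cast_le (α := R) (k + 1))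
    _ = Q * b * ((k + 1 + 1).ascFactorial t * (k + 1 : ℕ)) * Q ^ k := by ring

end GrowthBound

section GrowthTwistedDeriv

variable {Q b : ℝ} {t : ℕ} {f : ℤ⟦X⟧} {r M : ℕ}

lemma GrowthBound.linFactor_mul {j : ℕ} (hQ : (r : ℝ) ^ 2 * j ≤ Q) (h : GrowthBound Q t b f) :
    GrowthBound Q t (2 * b) ((linFactor r j : ℤ⟦X⟧) * f) := by
  rw [coe_linFactor, sub_mul, one_mul, mul_assoc, two_mul]
  refine h.sub (h.C_mul_X_mul ?_)
  rwa [norm_mul, norm_pow, norm_natCast, norm_natCast]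

lemma GrowthBound.prod_linFactor_mul (hQ : (r : ℝ) ^ 2 * M ≤ Q) (h : GrowthBound Q t b f)
    {s : Finset ℕ} (hs : ∀ j ∈ s, j ≤ M) :
    GrowthBound Q t (2 ^ #s * b) (((∏ j ∈ s, linFactor r j : ℤ[X]) : ℤ⟦X⟧) * f) := by
  induction s using Finset.induction_on with
  | empty => simpa using h
  | insert a s ha ih =>
    rw [prod_insert ha, card_insert_of_notMem ha, Polynomial.coe_mul, mul_assoc, pow_succ',
      mul_assoc]
    refine (ih fun j hj ↦ hs j (mem_insert_of_mem hj)).linFactor_mul (le_trans ?_ hQ)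
    gcongr
    exact_mod_cast hs a (mem_insert_self a s)

lemma GrowthBound.prod_linFactor_mul_of_card_le (hQ : (r : ℝ) ^ 2 * M ≤ Q)
    (h : GrowthBound Q t b f) {s : Finset ℕ} (hs : ∀ j ∈ s, j ≤ M) (hcard : #s ≤ M) :
    GrowthBound Q t (2 ^ M * b) (((∏ j ∈ s, linFactor r j : ℤ[X]) : ℤ⟦X⟧) * f) := by
  have hQ₀ : 0 ≤ Q := le_trans (by positivity) hQ
  have hb := h.nonneg
  refine (h.prod_linFactor_mul hQ hs).mono hQ₀ ?_
  gcongr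
  norm_num

lemma GrowthBound.logDerivNum_mul (hQ : (r : ℝ) ^ 2 * M ≤ Q) {β c : ℕ} (hβ : β ≤ M) (hc : c ≤ M)
    (h : GrowthBound Q t b f) :
    GrowthBound Q t (M * (r * M * 2 ^ M) * b) ((logDerivNum r β c : ℤ⟦X⟧) * f) := by
  have hQ₀ : 0 ≤ Q := le_trans (by positivity) hQ
  have hb := h.nonneg
  have hexpand : (logDerivNum r β c : ℤ⟦X⟧) * f = ∑ j ∈ range c, PowerSeries.C ((r : ℤ) * j) *
      (((∏ i ∈ (range β).erase j, linFactor r i : ℤ[X]) : ℤ⟦X⟧) * f) := by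
    have hcoe : (logDerivNum r β c : ℤ⟦X⟧) = ∑ j ∈ range c,
        ((C ((r : ℤ) * j) * ∏ i ∈ (range β).erase j, linFactor r i : ℤ[X]) : ℤ⟦X⟧) :=
      map_sum (coeToPowerSeries.ringHom (R := ℤ))
        (fun j : ℕ ↦ C ((r : ℤ) * j) * ∏ i ∈ (range β).erase j, linFactor r i) (range c)
    simp only [hcoe, sum_mul, Polynomial.coe_mul, Polynomial.coe_C, mul_assoc]
  rw [hexpand]
  refine (GrowthBound.sum fun j _ ↦ (h.prod_linFactor_mul_of_card_le hQ (s := (range β).erase j)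
    (fun i hi ↦ ?_) ?_).C_mul _).mono hQ₀ ?_
  · have := mem_range.mp (mem_of_mem_erase hi)
    omega
  · exact card_erase_le.trans ((card_range β).trans_le hβ)
  · calc ∑ j ∈ range c, ‖(r : ℤ) * j‖ * (2 ^ M * b) ≤ ∑ j ∈ range c, r * M * (2 ^ M * b) := by
          refine sum_le_sum fun j hj ↦ ?_
          rw [norm_mul, norm_natCast, norm_natCast]
          gcongr
          exact (mem_range.mp hj).le.trans hc
      _ = c * (r * M * 2 ^ M) * b := by rw [sum_const, card_range, nsmul_eq_mul]; ring
      _ ≤ M * (r * M * 2 ^ M) * b := by gcongr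

/-- The factor by which one application of `twistedDeriv (linProd r β) (logDerivNum r β c)`, with
`c, β ≤ M`, increases a `GrowthBound`. -/
noncomputable def twistedDerivConst (r M : ℕ) : ℝ :=
  2 ^ M * (2 * (r : ℝ) ^ 2 * M) + M * (r * M * 2 ^ M)

lemma twistedDerivConst_nonneg (r M : ℕ) : 0 ≤ twistedDerivConst r M := by
  unfold twistedDerivConst
  positivity

lemma GrowthBound.linProd_mul_derivative_add {β c : ℕ} (hβ : β ≤ M) (hc : c ≤ M)
    (h : GrowthBound (2 * (r : ℝ) ^ 2 * M) t b f) :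
    GrowthBound (2 * (r : ℝ) ^ 2 * M) (t + 1) (twistedDerivConst r M * b)
      ((linProd r β : ℤ⟦X⟧) * d⁄dX ℤ f + (logDerivNum r β c : ℤ⟦X⟧) * f) := by
  have hQ : (r : ℝ) ^ 2 * M ≤ 2 * (r : ℝ) ^ 2 * M := by
    rw [mul_assoc]
    exact le_mul_of_one_le_left (by positivity) one_le_two
  rw [twistedDerivConst, add_mul, mul_assoc (2 ^ M)]
  refine (h.derivative.prod_linFactor_mul_of_card_le hQ (fun j hj ↦ ?_) ?_).add
    ((h.logDerivNum_mul hQ hβ hc).succ (by positivity))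
  · exact (mem_range.mp hj).le.trans hβ
  · exact (card_range β).trans_le hβ

lemma GrowthBound.iterate_twistedDeriv {A : ℤ[X]} {β c : ℕ} (hβ : β ≤ M) (hc : c ≤ M)
    (h : GrowthBound (2 * (r : ℝ) ^ 2 * M) 0 b (A : ℤ⟦X⟧)) (t : ℕ) :
    GrowthBound (2 * (r : ℝ) ^ 2 * M) t (twistedDerivConst r M ^ t * b)
      (((twistedDeriv (linProd r β) (logDerivNum r β c))^[t] A : ℤ[X]) : ℤ⟦X⟧) := by
  induction t with
  | zero => simpa using h
  | succ t ih =>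
    rw [Function.iterate_succ_apply', twistedDeriv, Polynomial.coe_add,
      Polynomial.coe_mul, Polynomial.coe_mul, ← PowerSeries.derivative_coe,
      pow_succ' (twistedDerivConst r M), mul_assoc (twistedDerivConst r M)]
    exact ih.linProd_mul_derivative_add hβ hc

end GrowthTwistedDeriv

section Evaluation

/-- Absolute convergence of the integral power series `f` at the real point `w`. -/
def SummableAt (f : ℤ⟦X⟧) (w : ℝ) : Prop :=
  Summable fun k ↦ ‖((PowerSeries.coeff k f : ℤ) : ℝ) * w ^ k‖

/-- The value of the integral power series `f` at the real point `w` (the default value `0` if the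
series is not `SummableAt`). -/
noncomputable def evalAt (f : ℤ⟦X⟧) (w : ℝ) : ℝ :=
  ∑' k, ((PowerSeries.coeff k f : ℤ) : ℝ) * w ^ k

variable {f g : ℤ⟦X⟧} {w : ℝ}

lemma SummableAt.add (hf : SummableAt f w) (hg : SummableAt g w) : SummableAt (f + g) w := by
  refine Summable.of_nonneg_of_le (fun _ ↦ norm_nonneg _) (fun k ↦ ?_) (Summable.add hf hg)
  rw [map_add, Int.cast_add, add_mul]
  exact norm_add_le _ _

lemma evalAt_add (hf : SummableAt f w) (hg : SummableAt g w) :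
    evalAt (f + g) w = evalAt f w + evalAt g w := by
  rw [evalAt, evalAt, evalAt, ← Summable.tsum_add (Summable.of_norm hf) (Summable.of_norm hg)]
  exact tsum_congr fun k ↦ by rw [map_add, Int.cast_add, add_mul]

lemma coeff_mul_mul_pow (f g : ℤ⟦X⟧) (w : ℝ) (k : ℕ) :
    ((PowerSeries.coeff k (f * g) : ℤ) : ℝ) * w ^ k = ∑ p ∈ antidiagonal k,
      (((PowerSeries.coeff p.1 f : ℤ) : ℝ) * w ^ p.1) *
        (((PowerSeries.coeff p.2 g : ℤ) : ℝ) * w ^ p.2) := by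
  rw [PowerSeries.coeff_mul, Int.cast_sum, sum_mul]
  refine sum_congr rfl fun p hp ↦ ?_
  rw [← mem_antidiagonal.mp hp, pow_add]
  push_cast
  ring

lemma SummableAt.mul (hf : SummableAt f w) (hg : SummableAt g w) : SummableAt (f * g) w :=
  (summable_norm_sum_mul_antidiagonal_of_summable_norm hf hg).congr fun k ↦ by
    rw [coeff_mul_mul_pow]

lemma evalAt_mul (hf : SummableAt f w) (hg : SummableAt g w) :
    evalAt (f * g) w = evalAt f w * evalAt g w := by
  rw [evalAt, tsum_congr (coeff_mul_mul_pow f g w)]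
  exact (tsum_mul_tsum_eq_tsum_sum_antidiagonal_of_summable_norm hf hg).symm

lemma coeff_coe_mul_pow_eq_zero {p : ℤ[X]} (w : ℝ) :
    ∀ k ∉ range (p.natDegree + 1),
      ((PowerSeries.coeff k (p : ℤ⟦X⟧) : ℤ) : ℝ) * w ^ k = 0 := by
  intro k hk
  rw [mem_range, not_lt] at hk
  rw [coeff_coe, coeff_eq_zero_of_natDegree_lt hk, Int.cast_zero, zero_mul]

lemma summableAt_coe (p : ℤ[X]) (w : ℝ) : SummableAt (p : ℤ⟦X⟧) w :=
  summable_of_ne_finset_zero fun k hk ↦ by rw [coeff_coe_mul_pow_eq_zero w k hk, norm_zero]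

lemma evalAt_coe (p : ℤ[X]) (w : ℝ) : evalAt (p : ℤ⟦X⟧) w = aeval w p := by
  rw [evalAt, tsum_eq_sum (coeff_coe_mul_pow_eq_zero w), aeval_eq_sum_range]
  exact sum_congr rfl fun k _ ↦ by rw [coeff_coe, zsmul_eq_mul]

lemma SummableAt.sum {ι : Type*} {s : Finset ι} {f : ι → ℤ⟦X⟧} (hf : ∀ j ∈ s, SummableAt (f j) w) :
    SummableAt (∑ j ∈ s, f j) w :=
  sum_induction f (SummableAt · w) (fun _ _ ↦ SummableAt.add)
    (by simpa using summableAt_coe 0 w) hf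

lemma evalAt_sum {ι : Type*} {s : Finset ι} {f : ι → ℤ⟦X⟧} (hf : ∀ j ∈ s, SummableAt (f j) w) :
    evalAt (∑ j ∈ s, f j) w = ∑ j ∈ s, evalAt (f j) w := by
  induction s using Finset.cons_induction with
  | empty => simpa using evalAt_coe 0 w
  | cons a s ha ih =>
    have hs : ∀ j ∈ s, SummableAt (f j) w := fun j hj ↦ hf j (mem_cons_of_mem hj)
    rw [sum_cons, sum_cons, evalAt_add (hf a (mem_cons_self a s)) (SummableAt.sum hs), ih hs]

lemma SummableAt.pow (hf : SummableAt f w) (r : ℕ) : SummableAt (f ^ r) w := by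
  induction r with
  | zero => simpa using summableAt_coe 1 w
  | succ r ih => exact pow_succ f r ▸ ih.mul hf

lemma evalAt_pow (hf : SummableAt f w) (r : ℕ) : evalAt (f ^ r) w = evalAt f w ^ r := by
  induction r with
  | zero => simpa using evalAt_coe 1 w
  | succ r ih => rw [pow_succ, evalAt_mul (hf.pow r) hf, ih, pow_succ]

end Evaluation

section EvaluationBound

variable {f : ℤ⟦X⟧} {Q b w : ℝ} {t S : ℕ}

lemma GrowthBound.norm_coeff_mul_pow_le (hQ : 0 ≤ Q) (h : GrowthBound Q t b f) (hw : 0 ≤ w)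
    (hQw : 4 * (Q * w) ≤ 1) (hS : PowerSeries.X ^ S ∣ f) (k : ℕ) :
    ‖((PowerSeries.coeff k f : ℤ) : ℝ) * w ^ k‖ ≤
      b * t ! * 2 ^ t * (4 * (Q * w)) ^ S * (1 / 2) ^ k := by
  have hb := h.nonneg
  rcases lt_or_ge k S with hk | hk
  · rw [PowerSeries.X_pow_dvd_iff.mp hS k hk, Int.cast_zero, zero_mul, norm_zero]
    positivity
  · have hasc : (((k + 1).ascFactorial t : ℕ) : ℝ) ≤ t ! * 2 ^ t * 2 ^ k := by
      rw [Nat.ascFactorial_eq_factorial_mul_choose, mul_assoc, ← pow_add, add_comm t k]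
      exact_mod_cast Nat.mul_le_mul_left _ (Nat.choose_le_two_pow (k + t) t)
    calc ‖((PowerSeries.coeff k f : ℤ) : ℝ) * w ^ k‖ = ‖PowerSeries.coeff k f‖ * w ^ k := by
          rw [norm_mul, Int.norm_cast_real, norm_pow, Real.norm_of_nonneg hw]
      _ ≤ b * (t ! * 2 ^ t * 2 ^ k) * Q ^ k * w ^ k := by
          gcongr
          exact (h k).trans (by gcongr)
      _ = b * t ! * 2 ^ t * (4 * (Q * w)) ^ k * (1 / 2) ^ k := by
          rw [mul_pow, mul_pow, show (4 : ℝ) = 2 * 2 by norm_num, mul_pow, div_pow, one_pow]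
          field_simp
      _ ≤ b * t ! * 2 ^ t * (4 * (Q * w)) ^ S * (1 / 2) ^ k := by
          gcongr ?_ * _
          exact mul_le_mul_of_nonneg_left (pow_le_pow_of_le_one (by positivity) hQw hk)
            (by positivity)

lemma GrowthBound.summableAt (hQ : 0 ≤ Q) (h : GrowthBound Q t b f) (hw : 0 ≤ w)
    (hQw : 4 * (Q * w) ≤ 1) : SummableAt f w :=
  Summable.of_nonneg_of_le (fun _ ↦ norm_nonneg _)
    (h.norm_coeff_mul_pow_le hQ hw hQw (S := 0) (by simp)) (summable_geometric_two.mul_left _)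

lemma GrowthBound.abs_evalAt_le (hQ : 0 ≤ Q) (h : GrowthBound Q t b f) (hw : 0 ≤ w)
    (hQw : 4 * (Q * w) ≤ 1) (hS : PowerSeries.X ^ S ∣ f) :
    |evalAt f w| ≤ 2 * (b * t ! * 2 ^ t) * (4 * (Q * w)) ^ S :=
  (tsum_of_norm_bounded (hasSum_geometric_two.mul_left _)
    (h.norm_coeff_mul_pow_le hQ hw hQw hS)).trans_eq (by ring)

end EvaluationBound

section TwistedForm

variable {R ι : Type*} [CommRing R] [Fintype ι] {q : R[X]} {v : ι → R[X]} {g : ι → R⟦X⟧}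

/-- The linear form `∑ j, (Dⱼ^t Aⱼ) gⱼ` with `Dⱼ = twistedDeriv q (v j)`: the result of applying
`q d/dX` to `∑ j, Aⱼ gⱼ` `t` times when `q gⱼ' = vⱼ gⱼ`. -/
noncomputable def twistedForm (q : R[X]) (v A : ι → R[X]) (g : ι → R⟦X⟧) (t : ℕ) : R⟦X⟧ :=
  ∑ j, (((twistedDeriv q (v j))^[t] (A j) : R[X]) : R⟦X⟧) * g j

lemma twistedForm_succ (hg : ∀ j, (q : R⟦X⟧) * d⁄dX R (g j) = v j * g j) (A : ι → R[X]) (t : ℕ) :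
    twistedForm q v A g (t + 1) = q * d⁄dX R (twistedForm q v A g t) := by
  simp only [twistedForm, map_sum, mul_sum]
  refine sum_congr rfl fun j _ ↦ ?_
  rw [Function.iterate_succ_apply', twistedDeriv, Polynomial.coe_add, Polynomial.coe_mul,
    Polynomial.coe_mul, ← PowerSeries.derivative_coe, Derivation.leibniz, smul_eq_mul, smul_eq_mul]
  linear_combination -(((twistedDeriv q (v j))^[t] (A j) : R[X]) : R⟦X⟧) * hg j

lemma X_pow_dvd_twistedForm (hg : ∀ j, (q : R⟦X⟧) * d⁄dX R (g j) = v j * g j) {A : ι → R[X]}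
    {S : ℕ} (hA : PowerSeries.X ^ S ∣ ∑ j, (A j : R⟦X⟧) * g j) (t : ℕ) :
    PowerSeries.X ^ (S - t) ∣ twistedForm q v A g t := by
  induction t with
  | zero => exact hA
  | succ t ih =>
    rw [twistedForm_succ hg]
    exact (X_pow_dvd_derivative ih).mul_left _

end TwistedForm

section Forms

variable {ι : Type*} [Fintype ι] {r M H : ℕ} {b : ι → ℕ} {A : ι → ℤ[X]}

lemma norm_coeff_coe_le {A : ℤ[X]} (hA : ∀ k, |A.coeff k| ≤ H) {Q : ℝ} (hQ : 1 ≤ Q) (k : ℕ) :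
    ‖PowerSeries.coeff k (A : ℤ⟦X⟧)‖ ≤ H * Q ^ k := by
  rw [coeff_coe, Int.norm_eq_abs]
  calc |((A.coeff k : ℤ) : ℝ)| ≤ H := by exact_mod_cast hA k
    _ ≤ H * Q ^ k := le_mul_of_one_le_right (Nat.cast_nonneg H) (one_le_pow₀ hQ)

lemma one_le_sq_mul (hr : 1 ≤ r) (hM : 1 ≤ M) : (1 : ℝ) ≤ (r : ℝ) ^ 2 * M := by
  exact_mod_cast Nat.mul_pos (Nat.pow_pos hr) hM

lemma growthBound_coe_mul_rootProd (hr : 1 ≤ r) (hM : 1 ≤ M) {c : ℕ} (hc : c ≤ M) {A : ℤ[X]}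
    (hA : ∀ k, |A.coeff k| ≤ H) :
    GrowthBound (2 * (r : ℝ) ^ 2 * M) 0 (2 * H * 2 ^ M) ((A : ℤ⟦X⟧) * rootProd r c) := by
  refine growthBound_zero_iff.mpr (norm_coeff_mul_le (by positivity) (fun k ↦ ?_) fun k ↦ ?_)
  · refine norm_coeff_coe_le hA ?_ k
    linarith [one_le_sq_mul hr hM]
  · refine (norm_coeff_rootProd_le hr hc k).trans ?_
    gcongr
    norm_num

lemma growthBound_twistedForm (hr : 1 ≤ r) (hM : 1 ≤ M) (hb : ∀ j, b j ≤ M)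
    (hA : ∀ j k, |(A j).coeff k| ≤ H) (t : ℕ) :
    GrowthBound (2 * (r : ℝ) ^ 2 * M) t
      (twistedDerivConst r M ^ t * (Fintype.card ι * (2 * H * 2 ^ M)))
      (twistedForm (linProd r M) (fun j ↦ logDerivNum r M (b j)) A (fun j ↦ rootProd r (b j))
        t) := by
  induction t with
  | zero =>
    have h := GrowthBound.sum (s := univ) fun j _ ↦ growthBound_coe_mul_rootProd hr hM (hb j) (hA j)
    rw [sum_const, card_univ, nsmul_eq_mul] at h
    rw [pow_zero, one_mul]
    exact h
  | succ t ih =>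
    rw [twistedForm_succ fun j ↦ linProd_mul_derivative_rootProd r (hb j),
      pow_succ' (twistedDerivConst r M), mul_assoc (twistedDerivConst r M)]
    simpa [logDerivNum_zero] using ih.linProd_mul_derivative_add le_rfl (Nat.zero_le M)

variable {w : ℝ}

lemma summableAt_rootProd (hr : 1 ≤ r) {c : ℕ} (hc : c ≤ M) (hw : 0 ≤ w)
    (hw₁ : 4 * (2 * (r : ℝ) ^ 2 * M * w) ≤ 1) : SummableAt (rootProd r c) w :=
  (growthBound_zero_iff.mpr (norm_coeff_rootProd_le hr hc)).summableAt (by positivity) hw hw₁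

lemma abs_aeval_iterate_twistedDeriv_le (hr : 1 ≤ r) (hM : 1 ≤ M) (hw : 0 ≤ w)
    (hw₁ : 4 * (2 * (r : ℝ) ^ 2 * M * w) ≤ 1) {A : ℤ[X]} (hA : ∀ k, |A.coeff k| ≤ H) {c : ℕ}
    (hc : c ≤ M) (t : ℕ) :
    |aeval w ((twistedDeriv (linProd r M) (logDerivNum r M c))^[t] A)| ≤
      2 * (twistedDerivConst r M ^ t * H * t ! * 2 ^ t) := by
  have hA₀ : GrowthBound (2 * (r : ℝ) ^ 2 * M) 0 H (A : ℤ⟦X⟧) :=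
    growthBound_zero_iff.mpr (norm_coeff_coe_le hA (by linarith [one_le_sq_mul hr hM]))
  have h := (hA₀.iterate_twistedDeriv le_rfl hc t).abs_evalAt_le (S := 0) (by positivity) hw hw₁
    (by simp)
  rwa [evalAt_coe, pow_zero, mul_one] at h

lemma abs_sum_aeval_mul_le (hr : 1 ≤ r) (hM : 1 ≤ M) (hb : ∀ j, b j ≤ M)
    (hA : ∀ j k, |(A j).coeff k| ≤ H) {S : ℕ}
    (hS : PowerSeries.X ^ S ∣ ∑ j, (A j : ℤ⟦X⟧) * rootProd r (b j)) (hw : 0 ≤ w)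
    (hw₁ : 4 * (2 * (r : ℝ) ^ 2 * M * w) ≤ 1) {y : ι → ℝ} {τ δ : ℝ} (hτ : 0 ≤ τ)
    (hy : ∀ j, |y j - τ * evalAt (rootProd r (b j)) w| ≤ δ) (t : ℕ) :
    |∑ j, aeval w ((twistedDeriv (linProd r M) (logDerivNum r M (b j)))^[t] (A j)) * y j| ≤
      2 * (twistedDerivConst r M ^ t * H * t ! * 2 ^ t) * (Fintype.card ι *
        (τ * (2 * 2 ^ M) * (4 * (2 * (r : ℝ) ^ 2 * M * w)) ^ (S - t) + δ)) := by
  set p : ι → ℝ := fun j ↦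
    aeval w ((twistedDeriv (linProd r M) (logDerivNum r M (b j)))^[t] (A j))
  set F := twistedForm (linProd r M) (fun j ↦ logDerivNum r M (b j)) A (fun j ↦ rootProd r (b j)) t
    with hF
  have hFw : evalAt F w = ∑ j, p j * evalAt (rootProd r (b j)) w := by
    have hsum (j : ι) := summableAt_rootProd hr (hb j) hw hw₁
    rw [hF, twistedForm, evalAt_sum fun j _ ↦ (summableAt_coe _ w).mul (hsum j)]
    exact sum_congr rfl fun j _ ↦ by rw [evalAt_mul (summableAt_coe _ w) (hsum j), evalAt_coe]
  have hmain := (growthBound_twistedForm hr hM hb hA t).abs_evalAt_le (by positivity) hw hw₁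
    (X_pow_dvd_twistedForm (fun j ↦ linProd_mul_derivative_rootProd r (hb j)) hS t)
  have herror (j : ι) : |p j * (y j - τ * evalAt (rootProd r (b j)) w)| ≤
      2 * (twistedDerivConst r M ^ t * H * t ! * 2 ^ t) * δ := by
    rw [abs_mul]
    exact mul_le_mul (abs_aeval_iterate_twistedDeriv_le hr hM hw hw₁ (hA j) (hb j) t) (hy j)
      (abs_nonneg _) ((abs_nonneg _).trans
        (abs_aeval_iterate_twistedDeriv_le hr hM hw hw₁ (hA j) (hb j) t))
  have hdecomp : ∑ j, p j * y j =
      τ * evalAt F w + ∑ j, p j * (y j - τ * evalAt (rootProd r (b j)) w) := by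
    rw [hFw, mul_sum, ← sum_add_distrib]
    exact sum_congr rfl fun j _ ↦ by ring
  rw [hdecomp]
  calc _ ≤ τ * |evalAt F w| + ∑ j, |p j * (y j - τ * evalAt (rootProd r (b j)) w)| :=
        (abs_add_le _ _).trans (add_le_add (by rw [abs_mul, abs_of_nonneg hτ])
          (abs_sum_le_sum_abs _ _))
    _ ≤ τ * _ + ∑ _j : ι, _ :=
        add_le_add (mul_le_mul_of_nonneg_left hmain hτ) (sum_le_sum fun j _ ↦ herror j)
    _ = _ := by
        rw [sum_const, card_univ, nsmul_eq_mul]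
        ring

end Forms

section Counting

variable {r M l : ℕ} {b : Fin 3 → ℕ} {A : Fin 3 → ℤ[X]}

lemma exists_auxiliary_polynomials (hr : 2 ≤ r) (hb : StrictMono b) (hb₁ : 2 ≤ b 1)
    (hbM : ∀ j, b j ≤ M) (hl : M + 1 < l) :
    ∃ A : Fin 3 → ℤ[X], (∀ j, A j ≠ 0) ∧ (∀ j, (A j).natDegree ≤ 2 * l) ∧
      (∀ j k, |(A j).coeff k| ≤ height r M l) ∧
      PowerSeries.X ^ (5 * l) ∣ ∑ j, (A j : ℤ⟦X⟧) * rootProd r (b j) := by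
  have hr₁ : 1 ≤ r := by omega
  have hM : 1 ≤ M := by linarith [hbM 1]
  have hQ : 1 ≤ 2 * r ^ 2 * M := Nat.mul_pos (by positivity) hM
  have hcoeff (j : Fin 3) (k : ℕ) :
      PowerSeries.coeff k (rootProd r (b j)) ≤ ((2 ^ M * (2 * r ^ 2 * M) ^ k : ℕ) : ℤ) := by
    have h := (le_abs_self _).trans (norm_coeff_rootProd_le hr₁ (hbM j) k)
    have hpow : (2 : ℝ) ^ b j ≤ 2 ^ M := pow_le_pow_right₀ one_le_two (hbM j)
    exact_mod_cast h.trans (mul_le_mul_of_nonneg_right hpow (by positivity))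
  obtain ⟨A, hA₀, hA, hdeg, hord⟩ := exists_X_pow_dvd_sum (n := 2 * l) (S := 5 * l)
    Nat.one_le_two_pow hQ (height_pos hr₁ hM l) (fun j k ↦ coeff_rootProd_nonneg r (b j) k) hcoeff
    (by
      rw [Fintype.card_fin]
      refine prod_mul_pow_mul_lt ?_ hQ rfl
      nlinarith [Nat.one_le_two_pow (n := M)])
  refine ⟨A, ne_zero_of_X_pow_dvd_sum (K := ℚ) (L := 2 * l) (M := M)
    (fun j ↦ linProd_mul_derivative_rootProd r (hbM j)) (fun j ↦ ?_) (fun i j hij ↦ ?_) hdeg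
    (natDegree_linProd_le r M) (fun j ↦ natDegree_logDerivNum_le r M (b j)) (by omega) hord hA₀,
    hdeg, fun j k ↦ (hA j k).le, hord⟩
  · rw [PowerSeries.isUnit_iff_constantCoeff, constantCoeff_rootProd]
    exact isUnit_one
  · have h₁j : b 1 ≤ b j := hb.monotone (by omega)
    exact exists_hasNonintegralResidue_logDerivNum hr (hb hij) (hb₁.trans h₁j) (hbM j)

lemma aeval_one_div_eq_zero {f : ℤ[X]} {K d : ℕ} (hK : 0 < K) (hf : f.natDegree ≤ d)
    (h : (K : ℝ) ^ d * |aeval (1 / K : ℝ) f| < 1) : aeval (1 / K : ℝ) f = 0 := by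
  by_contra hne
  have hK₁ : (1 : ℝ) ≤ K := by exact_mod_cast hK
  have hone := one_le_pow_mul_abs_eval_div (K := ℝ) (f := f) (a := 1) (b := K)
    (by exact_mod_cast hK)
    (by rwa [Int.cast_one, Int.cast_natCast, eval_map_algebraMap])
  rw [Int.cast_one, Int.cast_natCast, eval_map_algebraMap] at hone
  have hpow : (K : ℝ) ^ f.natDegree ≤ (K : ℝ) ^ d := pow_le_pow_right₀ hK₁ hf
  exact (hone.trans (mul_le_mul_of_nonneg_right hpow (abs_nonneg _))).not_gt h

/-- The integers `y j` are so close to a common multiple `τ` of the values of `rootProd r (b j)` at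
`1 / (r ^ 2 n)` that every auxiliary form, differentiated up to `T` times, must vanish on them. -/
def IsWellApproximable (r M l : ℕ) (b : Fin 3 → ℕ) (T n : ℕ) (y : Fin 3 → ℤ) : Prop :=
  ∃ τ δ : ℝ, 0 ≤ τ ∧
    (∀ j, |y j - τ * evalAt (rootProd r (b j)) (1 / (r ^ 2 * n : ℕ))| ≤ δ) ∧
    ∀ t ≤ T, ((r ^ 2 * n : ℕ) : ℝ) ^ (2 * l + t * M) *
      (2 * (twistedDerivConst r M ^ t * height r M l * t ! * 2 ^ t) *
        (3 * (τ * (2 * 2 ^ M) * (8 * M / n) ^ (5 * l - t) + δ))) < 1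

lemma IsWellApproximable.sum_aeval_mul_eq_zero {T n : ℕ} {y : Fin 3 → ℤ}
    (hy : IsWellApproximable r M l b T n y) (hr : 1 ≤ r) (hM : 1 ≤ M) (hn : 8 * M ≤ n)
    (hbM : ∀ j, b j ≤ M) (hdeg : ∀ j, (A j).natDegree ≤ 2 * l)
    (hA : ∀ j k, |(A j).coeff k| ≤ height r M l)
    (hord : PowerSeries.X ^ (5 * l) ∣ ∑ j, (A j : ℤ⟦X⟧) * rootProd r (b j)) {t : ℕ} (ht : t ≤ T) :
    ∑ j, (y j : ℝ) * aeval (1 / (r ^ 2 * n : ℕ) : ℝ)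
      ((twistedDeriv (linProd r M) (logDerivNum r M (b j)))^[t] (A j)) = 0 := by
  obtain ⟨τ, δ, hτ, hδ, hsmall⟩ := hy
  have hn₀ : (0 : ℝ) < n := by exact_mod_cast (by omega : 0 < n)
  have hratio : 4 * (2 * (r : ℝ) ^ 2 * M * (1 / (r ^ 2 * n : ℕ))) = 8 * M / n := by
    push_cast
    field_simp
    norm_num
  have hle := abs_sum_aeval_mul_le hr hM hbM hA hord (by positivity)
    (hratio.trans_le ((div_le_one hn₀).mpr (by exact_mod_cast hn))) hτ hδ t
  rw [hratio, Fintype.card_fin] at hle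
  set f : ℤ[X] := ∑ j, C (y j) * (twistedDeriv (linProd r M) (logDerivNum r M (b j)))^[t] (A j)
  have hf : f.natDegree ≤ 2 * l + t * M :=
    natDegree_sum_le_of_forall_le _ _ fun j _ ↦ (natDegree_C_mul_le _ _).trans
      (natDegree_iterate_twistedDeriv_le (hdeg j) (natDegree_linProd_le r M)
        (natDegree_logDerivNum_le r M (b j)) t)
  have hval (w : ℝ) : aeval w f = ∑ j, (y j : ℝ) *
      aeval w ((twistedDeriv (linProd r M) (logDerivNum r M (b j)))^[t] (A j)) := by
    simp [f]
  rw [← hval]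
  refine aeval_one_div_eq_zero (Nat.mul_pos (by positivity) (by omega)) hf
    ((mul_le_mul_of_nonneg_left ?_ (by positivity)).trans_lt (hsmall t ht))
  rw [hval]
  simpa only [mul_comm, Nat.cast_ofNat] using hle

lemma aeval_linProd_ne_zero (hr : 1 ≤ r) {n : ℕ} (hn : M ≤ n) :
    aeval (1 / (r ^ 2 * n : ℕ) : ℝ) (linProd r M) ≠ 0 := by
  rw [aeval_linProd, prod_ne_zero_iff]
  intro j hj h
  have hjn : j < n := (mem_range.mp hj).trans_le hn
  push_cast at h
  exact hjn.ne ((one_sub_sq_mul_div_eq_zero_iff hr (by omega) j).mp h)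

lemma card_mul_le_of_isWellApproximable (hr : 2 ≤ r) (hb : StrictMono b) (hb₁ : 2 ≤ b 1)
    (hbM : ∀ j, b j ≤ M) (hl : M + 1 < l) {T : ℕ} {s : Finset ℕ}
    (hs : ∀ n ∈ s, 8 * M ≤ n ∧ ∃ y ≠ 0, IsWellApproximable r M l b (T + 2) n y) :
    #s * (T + 1) ≤ 6 * l + 3 * M := by
  obtain ⟨A, hA₀, hdeg, hA, hord⟩ := exists_auxiliary_polynomials hr hb hb₁ hbM hl
  have hr₁ : 1 ≤ r := by omega
  have hM : 1 ≤ M := by linarith [hbM 1]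
  let ψ : ℤ[X] → ℝ[X] := Polynomial.map (algebraMap ℤ ℝ)
  let W : ℝ[X] := iterWronskian (ψ (linProd r M)) (fun j ↦ ψ (logDerivNum r M (b j)))
    (fun j ↦ ψ (A j)) ![0, 1, 2]
  have hW : W ≠ 0 := by
    refine iterWronskian_fin_three_ne_zero (fun i j hij ↦ ?_) fun j ↦
      (Polynomial.map_ne_zero_iff (algebraMap ℤ ℝ).injective_int).mpr (hA₀ j)
    have h₁j : b 1 ≤ b j := hb.monotone (by omega)
    exact exists_hasNonintegralResidue_logDerivNum hr (hb hij) (hb₁.trans h₁j) (hbM j)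
  have hWdeg : W.natDegree ≤ 6 * l + 3 * M := by
    refine (natDegree_iterWronskian_le (L := 2 * l) (M := M)
      (fun j ↦ natDegree_map_le.trans (hdeg j)) (natDegree_map_le.trans (natDegree_linProd_le r M))
      (fun j ↦ natDegree_map_le.trans (natDegree_logDerivNum_le r M (b j))) _).trans_eq ?_
    simp [Fin.sum_univ_three]
    ring
  let point (n : ℕ) : ℝ := 1 / (r ^ 2 * n : ℕ)
  have hpoint : Set.InjOn point s := fun m _ n _ h ↦ by
    simpa [point, show r ≠ 0 by omega] using h
  have hdvd : ∀ w ∈ s.image point, (X - C w) ^ (T + 1) ∣ W := by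
    intro w hw
    obtain ⟨n, hn, rfl⟩ := mem_image.mp hw
    obtain ⟨hnM, y, hy₀, hy⟩ := hs n hn
    refine X_sub_C_pow_dvd_iterWronskian (T := T + 2) (y := fun j ↦ (y j : ℝ)) ?_ ?_
      (fun t ht ↦ ?_) ?_
    · rw [eval_map_algebraMap]
      exact aeval_linProd_ne_zero hr₁ (by omega)
    · exact fun h ↦ hy₀ (funext fun j ↦ Int.cast_eq_zero.mp (congrFun h j))
    · simp only [ψ, ← map_iterate_twistedDeriv, eval_map_algebraMap]
      exact hy.sum_aeval_mul_eq_zero hr₁ hM hnM hbM hdeg hA hord ht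
    · intro i
      fin_cases i <;> simp <;> omega
  rw [← card_image_of_injOn hpoint]
  exact (card_mul_le_natDegree hW hdvd).trans hWdeg

end Counting

section IntegerValues

/-- The sum of the absolute values of the coefficients of `P`. -/
def coeffAbsSum (P : ℤ[X]) : ℤ := ∑ i ∈ range (P.natDegree + 1), |P.coeff i|

variable {P : ℤ[X]}

lemma abs_coeff_le_coeffAbsSum {i : ℕ} (hi : i ≤ P.natDegree) : |P.coeff i| ≤ coeffAbsSum P :=
  single_le_sum (f := fun i ↦ |P.coeff i|) (fun _ _ ↦ abs_nonneg _)
    (mem_range.mpr (Nat.lt_succ_of_le hi))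

lemma one_le_coeffAbsSum (hP : P ≠ 0) : 1 ≤ coeffAbsSum P :=
  (Int.one_le_abs (leadingCoeff_ne_zero.mpr hP)).trans (abs_coeff_le_coeffAbsSum le_rfl)

lemma abs_eval_sub_leadingCoeff_mul_pow_le (hr : 1 ≤ P.natDegree)
    (hcoeff : P.coeff (P.natDegree - 1) = 0) {x : ℤ} (hx : x ≠ 0) :
    |P.eval x - P.leadingCoeff * x ^ P.natDegree| ≤ coeffAbsSum P * |x| ^ (P.natDegree - 2) := by
  have hx₁ : 1 ≤ |x| := Int.one_le_abs hx
  rw [eval_eq_sum_range, sum_range_succ, coeff_natDegree, add_sub_cancel_right]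
  calc |∑ i ∈ range P.natDegree, P.coeff i * x ^ i|
      ≤ ∑ i ∈ range P.natDegree, |P.coeff i * x ^ i| := abs_sum_le_sum_abs _ _
    _ ≤ ∑ i ∈ range P.natDegree, |P.coeff i| * |x| ^ (P.natDegree - 2) := by
        refine sum_le_sum fun i hi ↦ ?_
        rw [mem_range] at hi
        rw [abs_mul, abs_pow]
        rcases eq_or_ne i (P.natDegree - 1) with rfl | hi₁
        · simp [hcoeff]
        · gcongr
          omega
    _ ≤ coeffAbsSum P * |x| ^ (P.natDegree - 2) := by
        rw [← sum_mul, coeffAbsSum, sum_range_succ]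
        gcongr
        exact le_add_of_nonneg_right (abs_nonneg _)

lemma abs_sub_mul_pow_le {K : Type*} [CommRing K] [LinearOrder K] [IsStrictOrderedRing K]
    {x y : K} (hx : 0 ≤ x) (hy : 0 ≤ y) (k : ℕ) :
    |x - y| * x ^ k ≤ |x ^ (k + 1) - y ^ (k + 1)| := by
  rcases le_total y x with h | h
  · rw [abs_of_nonneg (sub_nonneg.mpr h), abs_of_nonneg (sub_nonneg.mpr (by gcongr)), sub_mul,
      ← pow_succ', pow_succ' y]
    gcongr
  · rw [abs_of_nonpos (sub_nonpos.mpr h), abs_of_nonpos (sub_nonpos.mpr (by gcongr)), neg_sub,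
      neg_sub, sub_mul, ← pow_succ', pow_succ' y]
    gcongr

lemma abs_abs_sub_mul_abs_le (hr : 2 ≤ P.natDegree) (hcoeff : P.coeff (P.natDegree - 1) = 0)
    {x : ℤ} (hx : x ≠ 0) {τ : ℝ} (hτ : 0 ≤ τ)
    (heq : |(P.leadingCoeff : ℝ)| * τ ^ P.natDegree = |((P.eval x : ℤ) : ℝ)|) :
    |(|x| : ℝ) - τ| * |(x : ℝ)| ≤ coeffAbsSum P := by
  have hP : P ≠ 0 := ne_zero_of_natDegree_gt hr
  have hlead : (1 : ℝ) ≤ |(P.leadingCoeff : ℝ)| := by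
    exact_mod_cast Int.one_le_abs (leadingCoeff_ne_zero.mpr hP)
  have hclose : |((P.eval x : ℤ) : ℝ) - P.leadingCoeff * (x : ℝ) ^ P.natDegree| ≤
      coeffAbsSum P * |(x : ℝ)| ^ (P.natDegree - 2) := by
    exact_mod_cast abs_eval_sub_leadingCoeff_mul_pow_le (by omega) hcoeff hx
  have hpow : |(|x| : ℝ) ^ P.natDegree - τ ^ P.natDegree| ≤
      coeffAbsSum P * |(x : ℝ)| ^ (P.natDegree - 2) :=
    calc |(|x| : ℝ) ^ P.natDegree - τ ^ P.natDegree|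
        ≤ |(P.leadingCoeff : ℝ)| * |(|x| : ℝ) ^ P.natDegree - τ ^ P.natDegree| :=
          le_mul_of_one_le_left (abs_nonneg _) hlead
      _ = abs (|P.leadingCoeff * (x : ℝ) ^ P.natDegree| - |((P.eval x : ℤ) : ℝ)|) := by
          rw [← heq, abs_mul (P.leadingCoeff : ℝ), abs_pow, ← mul_sub, abs_mul, abs_abs]
      _ ≤ _ := (abs_abs_sub_abs_le_abs_sub _ _).trans ((abs_sub_comm _ _).trans_le hclose)
  obtain ⟨k, hk⟩ : ∃ k, P.natDegree = k + 2 := ⟨P.natDegree - 2, by omega⟩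
  rw [hk, Nat.add_sub_cancel] at hpow
  have h := (abs_sub_mul_pow_le (abs_nonneg (x : ℝ)) hτ (k + 1)).trans hpow
  rw [pow_succ', ← mul_assoc] at h
  exact le_of_mul_le_mul_right h (by positivity)

lemma ne_zero_and_abs_abs_sub_le (hr : 2 ≤ P.natDegree) (hcoeff : P.coeff (P.natDegree - 1) = 0)
    {x : ℤ} {τ : ℝ} (hτ : 2 * coeffAbsSum P < τ)
    (heq : |(P.leadingCoeff : ℝ)| * τ ^ P.natDegree = |((P.eval x : ℤ) : ℝ)|) :
    x ≠ 0 ∧ |(|x| : ℝ) - τ| ≤ 2 * coeffAbsSum P / τ := by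
  have hP : P ≠ 0 := ne_zero_of_natDegree_gt hr
  have hsum : (1 : ℝ) ≤ coeffAbsSum P := by exact_mod_cast one_le_coeffAbsSum hP
  have hlead : (1 : ℝ) ≤ |(P.leadingCoeff : ℝ)| := by
    exact_mod_cast Int.one_le_abs (leadingCoeff_ne_zero.mpr hP)
  have hx : x ≠ 0 := by
    rintro rfl
    have hconst : |((P.eval 0 : ℤ) : ℝ)| ≤ coeffAbsSum P := by
      rw [← coeff_zero_eq_eval_zero]
      exact_mod_cast abs_coeff_le_coeffAbsSum (Nat.zero_le _)
    have hself : τ ≤ τ ^ P.natDegree := le_self_pow₀ (by linarith) (by omega)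
    nlinarith
  refine ⟨hx, ?_⟩
  have hmul := abs_abs_sub_mul_abs_le hr hcoeff hx (by linarith) heq
  have hhalf : τ / 2 ≤ |(x : ℝ)| := by
    by_contra! h
    rw [abs_of_neg (by linarith)] at hmul
    have hx₁ : (1 : ℝ) ≤ |(x : ℝ)| := by exact_mod_cast Int.one_le_abs hx
    nlinarith
  rw [le_div_iff₀ (by linarith)]
  nlinarith [abs_nonneg ((|x| : ℝ) - τ)]

end IntegerValues

section FactorialRoot

variable {r : ℕ} {κ : ℝ}

/-- The real number `(κ m!) ^ (1 / r)`, approximately the size of a solution `x` of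
`s m! = a x ^ r + ⋯` when `κ = |s / a|`. -/
noncomputable def factorialRoot (r : ℕ) (κ : ℝ) (m : ℕ) : ℝ := (κ * m !) ^ ((r : ℝ)⁻¹)

lemma factorialRoot_pow (hr : r ≠ 0) (hκ : 0 ≤ κ) (m : ℕ) : factorialRoot r κ m ^ r = κ * m ! :=
  Real.rpow_inv_natCast_pow (by positivity) hr

lemma factorialRoot_pos (r : ℕ) (hκ : 0 < κ) (m : ℕ) : 0 < factorialRoot r κ m := by
  unfold factorialRoot
  positivity

lemma tendsto_factorialRoot (hr : r ≠ 0) (hκ : 0 < κ) :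
    Tendsto (factorialRoot r κ) atTop atTop := by
  have hr₀ : (0 : ℝ) < (r : ℝ)⁻¹ := by positivity
  refine (tendsto_rpow_atTop hr₀).comp (Tendsto.const_mul_atTop hκ ?_)
  exact tendsto_natCast_atTop_atTop.comp
    (tendsto_atTop_mono Nat.self_le_factorial tendsto_id)

lemma one_le_evalAt_rootProd {c : ℕ} {w : ℝ} (hw : 0 ≤ w) (hsum : SummableAt (rootProd r c) w) :
    1 ≤ evalAt (rootProd r c) w := by
  have h := (Summable.of_norm hsum).le_tsum 0 fun k _ ↦ mul_nonneg
    (Int.cast_nonneg (coeff_rootProd_nonneg r c k)) (pow_nonneg hw k)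
  rwa [PowerSeries.coeff_zero_eq_constantCoeff_apply, constantCoeff_rootProd, Int.cast_one, one_mul,
    pow_zero] at h

lemma pow_mul_aeval_linProd (hr : r ≠ 0) {n c : ℕ} (hn : n ≠ 0) (hc : c ≤ n) :
    (n : ℝ) ^ c * aeval (1 / (r ^ 2 * n : ℕ) : ℝ) (linProd r c) = n.descFactorial c := by
  rw [aeval_linProd, ← card_range c, ← prod_const, card_range, ← prod_mul_distrib,
    Nat.descFactorial_eq_prod_range, Nat.cast_prod]
  refine prod_congr rfl fun j hj ↦ ?_
  rw [Nat.cast_sub ((mem_range.mp hj).le.trans hc)]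
  push_cast
  field_simp

lemma summableAt_rootProd_one_div (hr : 1 ≤ r) {n M c : ℕ} (hn : 0 < n) (hM : 8 * M ≤ n)
    (hc : c ≤ M) : SummableAt (rootProd r c) (1 / (r ^ 2 * n : ℕ)) := by
  refine summableAt_rootProd hr hc (by positivity) ?_
  push_cast
  have hMn : (8 : ℝ) * M ≤ n := by exact_mod_cast hM
  field_simp
  linarith

lemma pow_mul_factorialRoot_sub (hr : 1 ≤ r) (hκ : 0 < κ) {n M c : ℕ} (hn : 0 < n)
    (hM : 8 * M ≤ n) (hc : c ≤ M) (hrc : r ∣ c) :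
    (n : ℝ) ^ (c / r) * factorialRoot r κ (n - c) =
      factorialRoot r κ n * evalAt (rootProd r c) (1 / (r ^ 2 * n : ℕ)) := by
  have hr₀ : r ≠ 0 := by omega
  set w : ℝ := 1 / (r ^ 2 * n : ℕ) with hw
  have hsum : SummableAt (rootProd r c) w := summableAt_rootProd_one_div hr hn hM hc
  have hpow : aeval w (linProd r c) * evalAt (rootProd r c) w ^ r = 1 := by
    rw [← evalAt_pow hsum, ← evalAt_coe, ← evalAt_mul (summableAt_coe _ w) (hsum.pow r),
      linProd_mul_rootProd_pow, ← Polynomial.coe_one, evalAt_coe, map_one]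
  have hfact : (n ! : ℝ) = (n - c)! * ((n : ℝ) ^ c * aeval w (linProd r c)) := by
    rw [hw, pow_mul_aeval_linProd hr₀ hn.ne' (by omega), ← Nat.factorial_mul_descFactorial
      (show c ≤ n by omega)]
    push_cast
    rfl
  have heval := one_le_evalAt_rootProd (by positivity) hsum
  refine (pow_left_inj₀ (mul_nonneg (by positivity) (factorialRoot_pos r hκ _).le)
    (mul_nonneg (factorialRoot_pos r hκ _).le (by linarith)) hr₀).mp ?_
  rw [mul_pow, mul_pow, factorialRoot_pow hr₀ hκ.le, factorialRoot_pow hr₀ hκ.le, ← pow_mul,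
    Nat.div_mul_cancel hrc, hfact]
  linear_combination -(κ * (n - c)! * (n : ℝ) ^ c) * hpow

end FactorialRoot

section Solutions

/-- The constant `κ` for which the solutions `x` of `s m! = P(x)` satisfy
`|x| ≈ factorialRoot r κ m`. -/
noncomputable def solutionConst (P : ℤ[X]) (s : ℤ) : ℝ := |(s : ℝ)| / |(P.leadingCoeff : ℝ)|

variable {P : ℤ[X]} {s : ℤ}

lemma solutionConst_pos (hP : P ≠ 0) (hs : s ≠ 0) : 0 < solutionConst P s :=
  div_pos (abs_pos.mpr (Int.cast_ne_zero.mpr hs))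
    (abs_pos.mpr (Int.cast_ne_zero.mpr (leadingCoeff_ne_zero.mpr hP)))

lemma eventually_ne_zero_and_abs_abs_sub_factorialRoot_le (hr : 2 ≤ P.natDegree)
    (hcoeff : P.coeff (P.natDegree - 1) = 0) (hs : s ≠ 0) :
    ∀ᶠ m : ℕ in atTop, ∀ x : ℤ, s * (m ! : ℤ) = P.eval x → x ≠ 0 ∧
      |(|x| : ℝ) - factorialRoot P.natDegree (solutionConst P s) m| ≤
        2 * coeffAbsSum P / factorialRoot P.natDegree (solutionConst P s) m := by
  have hP : P ≠ 0 := ne_zero_of_natDegree_gt hr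
  have hκ := solutionConst_pos hP hs
  filter_upwards [(tendsto_factorialRoot (r := P.natDegree) (by omega) hκ).eventually_gt_atTop
    (2 * coeffAbsSum P)] with m hm x hx
  refine ne_zero_and_abs_abs_sub_le hr hcoeff hm ?_
  have hlead : (P.leadingCoeff : ℝ) ≠ 0 := Int.cast_ne_zero.mpr (leadingCoeff_ne_zero.mpr hP)
  rw [factorialRoot_pow (by omega) hκ.le, ← hx, solutionConst]
  push_cast
  rw [abs_mul, Nat.abs_cast]
  field_simp

lemma abs_pow_mul_sub_le {r : ℕ} {κ C : ℝ} (hr : 1 ≤ r) (hκ : 0 < κ) (hC : 0 ≤ C) {n M c : ℕ}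
    (hn : 0 < n) (hM : 8 * M ≤ n) (hc : c ≤ M) (hrc : r ∣ c) {x : ℝ}
    (hx : |x - factorialRoot r κ (n - c)| ≤ C / factorialRoot r κ (n - c)) :
    |(n : ℝ) ^ (c / r) * x -
        factorialRoot r κ n * evalAt (rootProd r c) (1 / (r ^ 2 * n : ℕ))| ≤
      C * (n : ℝ) ^ (2 * M) / factorialRoot r κ n := by
  have hn₁ : (1 : ℝ) ≤ n := by exact_mod_cast hn
  have hrel := pow_mul_factorialRoot_sub hr hκ hn hM hc hrc
  have hle : factorialRoot r κ n ≤ (n : ℝ) ^ (c / r) * factorialRoot r κ (n - c) :=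
    hrel ▸ le_mul_of_one_le_right (factorialRoot_pos r hκ n).le
      (one_le_evalAt_rootProd (by positivity) (summableAt_rootProd_one_div hr hn hM hc))
  rw [← hrel, ← mul_sub, abs_mul, abs_of_nonneg (by positivity)]
  calc (n : ℝ) ^ (c / r) * |x - factorialRoot r κ (n - c)|
      ≤ (n : ℝ) ^ (c / r) * (C / factorialRoot r κ (n - c)) := by gcongr
    _ = C * (n : ℝ) ^ (2 * (c / r)) / ((n : ℝ) ^ (c / r) * factorialRoot r κ (n - c)) := by
        rw [two_mul, pow_add]
        field_simp
    _ ≤ C * (n : ℝ) ^ (2 * M) / factorialRoot r κ n := by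
        have := factorialRoot_pos r hκ n
        gcongr
        exact (Nat.div_le_self _ _).trans hc

lemma exists_approximations (hr : 2 ≤ P.natDegree) (hcoeff : P.coeff (P.natDegree - 1) = 0)
    (hs : s ≠ 0) :
    ∃ m₀ : ℕ, ∀ (n M : ℕ) (b : Fin 3 → ℕ), 0 < n → 8 * M ≤ n → m₀ + M ≤ n → (∀ j, b j ≤ M) →
      (∀ j, P.natDegree ∣ b j) → (∀ j, ∃ x : ℤ, s * ((n - b j)! : ℤ) = P.eval x) →
      ∃ y : Fin 3 → ℤ, y ≠ 0 ∧ ∀ j,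
        |y j - factorialRoot P.natDegree (solutionConst P s) n *
            evalAt (rootProd P.natDegree (b j)) (1 / (P.natDegree ^ 2 * n : ℕ))| ≤
          2 * coeffAbsSum P * (n : ℝ) ^ (2 * M) /
            factorialRoot P.natDegree (solutionConst P s) n := by
  have hP : P ≠ 0 := ne_zero_of_natDegree_gt hr
  have hsum : (0 : ℝ) ≤ 2 * coeffAbsSum P :=
    mul_nonneg zero_le_two (by exact_mod_cast (one_le_coeffAbsSum hP).trans' zero_le_one)
  obtain ⟨m₀, hm₀⟩ := eventually_atTop.mp
    (eventually_ne_zero_and_abs_abs_sub_factorialRoot_le hr hcoeff hs)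
  refine ⟨m₀, fun n M b hn hM hm hbM hdvd hsol ↦ ?_⟩
  choose x hx using hsol
  have hsub (j : Fin 3) : m₀ ≤ n - b j := by have := hbM j; omega
  refine ⟨fun j ↦ (n : ℤ) ^ (b j / P.natDegree) * |x j|, fun h ↦ ?_, fun j ↦ ?_⟩
  · refine mul_ne_zero (pow_ne_zero _ (by omega)) (abs_ne_zero.mpr ?_) (congrFun h 0)
    exact (hm₀ _ (hsub 0) _ (hx 0)).1
  · rw [Int.cast_mul, Int.cast_pow, Int.cast_natCast, Int.cast_abs]
    exact abs_pow_mul_sub_le (by omega) (solutionConst_pos hP hs) hsum hn hM (hbM j) (hdvd j)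
      (hm₀ _ (hsub j) _ (hx j)).2

end Solutions

section ExponentialBounds

lemma self_le_exp (x : ℝ) : x ≤ Real.exp x := by linarith [Real.add_one_le_exp x]

lemma pow_le_exp_mul {x a : ℝ} (hx : 0 ≤ x) (h : x ≤ Real.exp a) (k : ℕ) :
    x ^ k ≤ Real.exp (k * a) := by
  rw [Real.exp_nat_mul]
  gcongr

lemma two_pow_le_exp (k : ℕ) : (2 : ℝ) ^ k ≤ Real.exp k := by
  simpa only [mul_one] using pow_le_exp_mul zero_le_two Real.exp_one_gt_two.le k

lemma log_factorial_le (n : ℕ) : Real.log n ! ≤ n * Real.log n := by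
  rw [← Real.log_pow]
  exact Real.log_le_log (by positivity) (by exact_mod_cast Nat.factorial_le_pow n)

lemma mul_log_sub_le_log_factorial (n : ℕ) : n * Real.log n - n ≤ Real.log n ! := by
  rcases eq_or_ne n 0 with rfl | hn
  · simp
  · have hpi : 0 ≤ Real.log (2 * Real.pi) := Real.log_nonneg (by linarith [Real.two_le_pi])
    linarith [Stirling.le_log_factorial_stirling hn, Real.log_natCast_nonneg n]

lemma log_factorialRoot {r : ℕ} {κ : ℝ} (hκ : 0 < κ) (n : ℕ) :
    Real.log (factorialRoot r κ n) = (Real.log κ + Real.log n !) / r := by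
  rw [factorialRoot, Real.log_rpow (by positivity), Real.log_mul hκ.ne' (by positivity)]
  ring

lemma twistedDerivConst_le_exp (r M : ℕ) :
    twistedDerivConst r M ≤ Real.exp (M * (3 * (r : ℝ) ^ 2 + 3)) := by
  have hle : twistedDerivConst r M ≤ 2 ^ M * (M * (M * (3 * (r : ℝ) ^ 2))) := by
    have hrr : (r : ℝ) ≤ (r : ℝ) ^ 2 := by exact_mod_cast Nat.le_self_pow two_ne_zero r
    have hMM : (M : ℝ) ≤ M * M := by exact_mod_cast Nat.le_mul_self M
    calc twistedDerivConst r M = 2 ^ M * (2 * (r : ℝ) ^ 2 * M + r * (M * M)) := by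
          rw [twistedDerivConst]
          ring
      _ ≤ 2 ^ M * (2 * (r : ℝ) ^ 2 * (M * M) + (r : ℝ) ^ 2 * (M * M)) := by gcongr
      _ = 2 ^ M * (M * (M * (3 * (r : ℝ) ^ 2))) := by ring
  calc twistedDerivConst r M ≤ 2 ^ M * (M * (M * (3 * (r : ℝ) ^ 2))) := hle
    _ ≤ Real.exp M * (Real.exp M * Real.exp (M * (3 * (r : ℝ) ^ 2))) := by
        gcongr
        · exact two_pow_le_exp M
        · exact self_le_exp _
        · exact self_le_exp _
    _ ≤ Real.exp (M * (3 * (r : ℝ) ^ 2 + 3)) := by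
        rw [← Real.exp_add, ← Real.exp_add, Real.exp_le_exp]
        linarith [M.cast_nonneg (α := ℝ)]

end ExponentialBounds

section Exponents

variable {θ q l L : ℝ}

-- With `l ≈ (31 / 75) q` both exponents below vanish, up to lower order terms, at `θ = 1 / 31`.
lemma main_exponent_le (hq : 0 ≤ q) (hL : 0 ≤ L) (hl : 31 / 75 * q - 1 ≤ l) (hθ₀ : 0 ≤ θ)
    (hθ : θ < 1 / 31) :
    q * L - (3 - 18 * θ) * (l * L) ≤ 3 * L - 13 / 75 * (1 - 31 * θ) * (q * L) := by
  have hmul : (31 / 75 * q - 1) * ((3 - 18 * θ) * L) ≤ l * ((3 - 18 * θ) * L) :=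
    mul_le_mul_of_nonneg_right hl (mul_nonneg (by linarith) hL)
  have hslack : 0 ≤ (1 - 31 * θ) * (q * L) := mul_nonneg (by linarith) (mul_nonneg hq hL)
  linarith [mul_nonneg hθ₀ hL]

lemma error_exponent_le (hL : 0 ≤ L) (hl : l ≤ 31 / 75 * q) (hθ₀ : 0 ≤ θ) :
    (2 + 13 * θ) * (l * L) - q * L ≤ -(13 / 75 * (1 - 31 * θ) * (q * L)) := by
  have hmul : l * ((2 + 13 * θ) * L) ≤ 31 / 75 * q * ((2 + 13 * θ) * L) :=
    mul_le_mul_of_nonneg_right hl (by positivity)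
  linarith

end Exponents

section Range

/-- The ranges of the parameters in the estimates: `𝒩 ≤ n ≤ 𝒩 + N / log N` is the short interval,
`M ≤ N ^ θ` bounds the differences, and `t` is the order of a derivative. -/
structure InRange (θ : ℝ) (N M 𝒩 n t : ℕ) : Prop where
  twenty_le_log : 20 ≤ Real.log N
  one_le : 1 ≤ M
  pow_mul_log_sq_le : (M : ℝ) ^ 4 * Real.log N ^ 2 ≤ N
  log_le : Real.log M ≤ θ * Real.log N
  le_start : N ≤ 𝒩
  start_le : 𝒩 ≤ n
  le_start_add : (n : ℝ) ≤ 𝒩 + N / Real.log N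
  le_two_mul : n ≤ 2 * N
  order_le : (t : ℝ) ≤ 4 * (M : ℝ) ^ 3 * Real.log N

namespace InRange

variable {θ : ℝ} {N M 𝒩 n t : ℕ}

lemma one_le_cast (h : InRange θ N M 𝒩 n t) : (1 : ℝ) ≤ N := by
  linarith [h.twenty_le_log, Real.log_le_self N.cast_nonneg]

lemma cast_le (h : InRange θ N M 𝒩 n t) : (N : ℝ) ≤ n := by
  exact_mod_cast h.le_start.trans h.start_le

lemma pos (h : InRange θ N M 𝒩 n t) : (0 : ℝ) < n := by
  linarith [h.one_le_cast, h.cast_le]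

lemma theta_nonneg (h : InRange θ N M 𝒩 n t) : 0 ≤ θ := by
  have hlog := h.twenty_le_log
  exact nonneg_of_mul_nonneg_left ((Real.log_natCast_nonneg M).trans h.log_le) (by linarith)

lemma log_le_log (h : InRange θ N M 𝒩 n t) : Real.log N ≤ Real.log n :=
  Real.log_le_log (by linarith [h.one_le_cast]) h.cast_le

lemma log_le_add_one (h : InRange θ N M 𝒩 n t) : Real.log n ≤ Real.log N + 1 := by
  have hN : (N : ℝ) ≠ 0 := by linarith [h.one_le_cast]
  calc Real.log n ≤ Real.log (2 * N) := Real.log_le_log h.pos (by exact_mod_cast h.le_two_mul)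
    _ = Real.log 2 + Real.log N := Real.log_mul two_ne_zero hN
    _ ≤ Real.log N + 1 := by linarith [Real.log_two_lt_d9]

lemma mul_log_le (h : InRange θ N M 𝒩 n t) : M * Real.log N ≤ N := by
  have hM : (1 : ℝ) ≤ M := by exact_mod_cast h.one_le
  have hlog := h.twenty_le_log
  calc (M : ℝ) * Real.log N ≤ (M : ℝ) ^ 4 * Real.log N ^ 2 := by
        gcongr
        · exact le_self_pow₀ hM (by norm_num)
        · exact le_self_pow₀ (by linarith) two_ne_zero
    _ ≤ N := h.pow_mul_log_sq_le

lemma le_cast (h : InRange θ N M 𝒩 n t) : (M : ℝ) ≤ N :=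
  (le_mul_of_one_le_right M.cast_nonneg (by linarith [h.twenty_le_log])).trans h.mul_log_le

lemma order_mul_mul_log_le (h : InRange θ N M 𝒩 n t) : t * M * Real.log N ≤ 4 * N := by
  calc t * M * Real.log N ≤ 4 * (M : ℝ) ^ 3 * Real.log N * M * Real.log N := by
        gcongr
        exact h.order_le
    _ = 4 * ((M : ℝ) ^ 4 * Real.log N ^ 2) := by ring
    _ ≤ 4 * N := by linarith [h.pow_mul_log_sq_le]

lemma order_mul_log_le (h : InRange θ N M 𝒩 n t) : t * Real.log N ≤ 4 * N := by
  have hM : (1 : ℝ) ≤ M := by exact_mod_cast h.one_le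
  refine le_trans ?_ h.order_mul_mul_log_le
  gcongr
  exact le_mul_of_one_le_right t.cast_nonneg hM

lemma order_mul_le (h : InRange θ N M 𝒩 n t) : (t : ℝ) * M ≤ 4 * N :=
  (le_mul_of_one_le_right (by positivity) (by linarith [h.twenty_le_log])).trans
    h.order_mul_mul_log_le

lemma order_le_mul (h : InRange θ N M 𝒩 n t) : (t : ℝ) ≤ 4 * N :=
  (le_mul_of_one_le_right t.cast_nonneg (by linarith [h.twenty_le_log])).trans h.order_mul_log_le

lemma mono {T : ℕ} (h : InRange θ N M 𝒩 n T) (ht : t ≤ T) : InRange θ N M 𝒩 n t :=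
  { h with order_le := le_trans (by exact_mod_cast ht) h.order_le }

variable {r l : ℕ}

lemma denominator_pow_le (h : InRange θ N M 𝒩 n t) (hl : (l : ℝ) ≤ N) :
    ((r ^ 2 * n : ℕ) : ℝ) ^ (2 * l + t * M) ≤
      Real.exp (2 * l * Real.log N + (6 * (r : ℝ) ^ 2 + 10) * N) := by
  have hbase : ((r ^ 2 * n : ℕ) : ℝ) ≤ Real.exp ((r : ℝ) ^ 2 + (Real.log N + 1)) := by
    push_cast
    rw [Real.exp_add]
    gcongr
    · exact self_le_exp _
    · exact Real.le_exp_of_log_le h.log_le_add_one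
  refine (pow_le_exp_mul (by positivity) hbase _).trans (Real.exp_le_exp.mpr ?_)
  push_cast
  have hl' := mul_le_mul_of_nonneg_right hl (show 0 ≤ (r : ℝ) ^ 2 + 1 by positivity)
  have ht := mul_le_mul_of_nonneg_right h.order_mul_le (show 0 ≤ (r : ℝ) ^ 2 + 1 by positivity)
  linarith [h.order_mul_mul_log_le]

lemma height_le (h : InRange θ N M 𝒩 n t) (hr : 1 ≤ r) (hl : (l : ℝ) ≤ N) :
    height r M l ≤ Real.exp (13 * l * θ * Real.log N + (26 * (r : ℝ) ^ 2 + 50) * N) := by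
  have hfirst : 3 * (2 * (l : ℝ) + 1) * 2 ^ M ≤ Real.exp (9 * N + N) := by
    rw [Real.exp_add]
    gcongr
    · exact le_trans (by linarith [h.one_le_cast]) (self_le_exp _)
    · exact (two_pow_le_exp M).trans (Real.exp_le_exp.mpr h.le_cast)
  have hsecond : 2 * (r : ℝ) ^ 2 * M ≤ Real.exp (2 * (r : ℝ) ^ 2 + θ * Real.log N) := by
    rw [Real.exp_add]
    gcongr
    · exact self_le_exp _
    · exact Real.le_exp_of_log_le h.log_le
  rw [height]
  push_cast
  refine (mul_le_mul (pow_le_exp_mul (by positivity) hfirst 5)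
    (pow_le_exp_mul (by positivity) hsecond (13 * l)) (by positivity) (by positivity)).trans ?_
  rw [← Real.exp_add, Real.exp_le_exp]
  push_cast
  linarith [mul_le_mul_of_nonneg_right hl (sq_nonneg (r : ℝ))]

lemma twistedDerivConst_pow_le (h : InRange θ N M 𝒩 n t) :
    twistedDerivConst r M ^ t ≤ Real.exp ((12 * (r : ℝ) ^ 2 + 12) * N) := by
  refine (pow_le_exp_mul (twistedDerivConst_nonneg r M) (twistedDerivConst_le_exp r M) t).trans
    (Real.exp_le_exp.mpr ?_)
  linarith [mul_le_mul_of_nonneg_right h.order_mul_le (show 0 ≤ 3 * (r : ℝ) ^ 2 + 3 by positivity)]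

lemma factorial_order_le (h : InRange θ N M 𝒩 n t) : (t ! : ℝ) ≤ Real.exp (8 * N) := by
  have hlog := h.twenty_le_log
  have hN : (N : ℝ) ≠ 0 := by linarith [h.one_le_cast]
  refine Real.le_exp_of_log_le ((log_factorial_le t).trans ?_)
  rcases t.eq_zero_or_pos with rfl | ht
  · simp
  · have hlogt : Real.log t ≤ 2 * Real.log N := by
      calc Real.log t ≤ Real.log (4 * N) := Real.log_le_log (by exact_mod_cast ht) h.order_le_mul
        _ = Real.log 4 + Real.log N := Real.log_mul (by norm_num) hN
        _ ≤ 2 * Real.log N := by linarith [Real.log_le_self (show (0 : ℝ) ≤ 4 by norm_num)]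
    calc t * Real.log t ≤ t * (2 * Real.log N) := by gcongr
      _ ≤ 8 * N := by linarith [h.order_mul_log_le]

lemma prefactor_le (h : InRange θ N M 𝒩 n t) (hr : 1 ≤ r) (hl : (l : ℝ) ≤ N) :
    ((r ^ 2 * n : ℕ) : ℝ) ^ (2 * l + t * M) *
        (2 * (twistedDerivConst r M ^ t * height r M l * t ! * 2 ^ t)) ≤
      Real.exp ((2 + 13 * θ) * (l * Real.log N) + (44 * (r : ℝ) ^ 2 + 85) * N) := by
  have hW := twistedDerivConst_nonneg r M
  calc _ ≤ Real.exp (2 * l * Real.log N + (6 * (r : ℝ) ^ 2 + 10) * N) *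
        (Real.exp N * (Real.exp ((12 * (r : ℝ) ^ 2 + 12) * N) *
          Real.exp (13 * l * θ * Real.log N + (26 * (r : ℝ) ^ 2 + 50) * N) *
          Real.exp (8 * N) * Real.exp (4 * N))) := by
        gcongr
        · exact h.denominator_pow_le hl
        · linarith [Real.add_one_le_exp (N : ℝ), h.one_le_cast]
        · exact h.twistedDerivConst_pow_le
        · exact h.height_le hr hl
        · exact h.factorial_order_le
        · exact (two_pow_le_exp t).trans (Real.exp_le_exp.mpr h.order_le_mul)
    _ = _ := by
        simp only [← Real.exp_add]
        ring_nf

variable {κ C : ℝ}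

lemma factorialRoot_le (h : InRange θ N M 𝒩 n t) (hr : 1 ≤ r) (hκ : 0 < κ) :
    factorialRoot r κ n ≤ Real.exp (𝒩 / r * Real.log N + (4 + |Real.log κ|) * N) := by
  have hr₁ : (1 : ℝ) ≤ r := by exact_mod_cast hr
  have hN := h.one_le_cast
  have hlog := h.twenty_le_log
  have hstart : (𝒩 : ℝ) ≤ 2 * N := by exact_mod_cast h.start_le.trans h.le_two_mul
  have hfact : Real.log n ! ≤ 𝒩 * Real.log N + 4 * N :=
    calc Real.log n ! ≤ n * Real.log n := log_factorial_le n
      _ ≤ (𝒩 + N / Real.log N) * (Real.log N + 1) := by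
          gcongr
          · exact h.le_start_add
          · exact h.log_le_add_one
      _ = 𝒩 * Real.log N + 𝒩 + N + N / Real.log N := by
          field_simp
          ring
      _ ≤ 𝒩 * Real.log N + 4 * N := by
          linarith [div_le_self N.cast_nonneg (show 1 ≤ Real.log N by linarith)]
  refine Real.le_exp_of_log_le ?_
  rw [log_factorialRoot hκ, div_le_iff₀ (by linarith), add_mul, mul_right_comm,
    div_mul_cancel₀ _ (by linarith)]
  have hκN : |Real.log κ| ≤ |Real.log κ| * N := le_mul_of_one_le_right (abs_nonneg _) hN
  have hrN : (4 + |Real.log κ|) * N ≤ (4 + |Real.log κ|) * N * r :=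
    le_mul_of_one_le_right (by positivity) hr₁
  linarith [le_abs_self (Real.log κ)]

lemma le_factorialRoot (h : InRange θ N M 𝒩 n t) (hr : 1 ≤ r) (hκ : 0 < κ) :
    Real.exp (𝒩 / r * Real.log N - (2 + |Real.log κ|) * N) ≤ factorialRoot r κ n := by
  have hr₁ : (1 : ℝ) ≤ r := by exact_mod_cast hr
  have hn : (n : ℝ) ≤ 2 * N := by exact_mod_cast h.le_two_mul
  have hfact : 𝒩 * Real.log N ≤ n * Real.log n := by
    gcongr ?_ * ?_
    · exact_mod_cast h.start_le
    · exact h.log_le_log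
  rw [← Real.le_log_iff_exp_le (factorialRoot_pos r hκ n), log_factorialRoot hκ,
    le_div_iff₀ (by linarith), sub_mul, mul_right_comm, div_mul_cancel₀ _ (by linarith)]
  have hκN : |Real.log κ| ≤ |Real.log κ| * N :=
    le_mul_of_one_le_right (abs_nonneg _) h.one_le_cast
  have hrN : (2 + |Real.log κ|) * N ≤ (2 + |Real.log κ|) * N * r :=
    le_mul_of_one_le_right (by positivity) hr₁
  linarith [neg_abs_le (Real.log κ), mul_log_sub_le_log_factorial n]

lemma remainder_pow_le (h : InRange θ N M 𝒩 n t) (hθ : θ < 1 / 31) :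
    (8 * (M : ℝ) / n) ^ (5 * l - t) ≤
      Real.exp (-(5 * (1 - θ) * (l * Real.log N)) + (40 * l + 4 * N)) := by
  have hlog := h.twenty_le_log
  have hM : (0 : ℝ) < M := by exact_mod_cast h.one_le
  have hn := h.pos
  have hbase : 8 * (M : ℝ) / n ≤ Real.exp (-((1 - θ) * Real.log N - 8)) := by
    refine Real.le_exp_of_log_le ?_
    rw [Real.log_div (by positivity) hn.ne', Real.log_mul (by norm_num) hM.ne']
    linarith [h.log_le, h.log_le_log, Real.log_le_self (show (0 : ℝ) ≤ 8 by norm_num)]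
  refine (pow_le_exp_mul (by positivity) hbase _).trans (Real.exp_le_exp.mpr ?_)
  have hsub : 5 * (l : ℝ) - t ≤ (5 * l - t : ℕ) := by
    rw [sub_le_iff_le_add]
    exact_mod_cast le_tsub_add
  have hfactor : 0 ≤ (1 - θ) * Real.log N - 8 := by nlinarith
  have htθ : 0 ≤ t * Real.log N * θ :=
    mul_nonneg (mul_nonneg t.cast_nonneg (by linarith)) h.theta_nonneg
  linarith [mul_le_mul_of_nonneg_right hsub hfactor, h.order_mul_log_le,
    t.cast_nonneg (α := ℝ)]

lemma main_term_le (h : InRange θ N M 𝒩 n t) (hr : 1 ≤ r) (hκ : 0 < κ) (hθ : θ < 1 / 31)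
    (hl : (l : ℝ) ≤ N) :
    3 * (factorialRoot r κ n * (2 * 2 ^ M) * (8 * M / n) ^ (5 * l - t)) ≤
      Real.exp (𝒩 / r * Real.log N - 5 * (1 - θ) * (l * Real.log N) +
        (60 + |Real.log κ|) * N) := by
  have hN := h.one_le_cast
  have hroot := factorialRoot_pos r hκ n
  have hsix : (6 : ℝ) ≤ Real.exp (6 * N) := by linarith [self_le_exp (6 * N)]
  calc _ = 6 * (factorialRoot r κ n * 2 ^ M * (8 * M / n) ^ (5 * l - t)) := by ring
    _ ≤ Real.exp (6 * N) * (Real.exp (𝒩 / r * Real.log N + (4 + |Real.log κ|) * N) *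
        Real.exp N * Real.exp (-(5 * (1 - θ) * (l * Real.log N)) + (40 * l + 4 * N))) := by
        gcongr
        · exact h.factorialRoot_le hr hκ
        · exact (two_pow_le_exp M).trans (Real.exp_le_exp.mpr h.le_cast)
        · exact h.remainder_pow_le hθ
    _ ≤ _ := by
        simp only [← Real.exp_add]
        rw [Real.exp_le_exp]
        linarith

lemma error_term_le (h : InRange θ N M 𝒩 n t) (hr : 1 ≤ r) (hκ : 0 < κ) (hC : 0 < C) :
    3 * (C * (n : ℝ) ^ (2 * M) / factorialRoot r κ n) ≤
      Real.exp (-(𝒩 / r * Real.log N) + (10 + |Real.log κ| + |Real.log C|) * N) := by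
  have hN := h.one_le_cast
  have hC' : C ≤ Real.exp (|Real.log C| * N) := Real.le_exp_of_log_le
    ((le_abs_self _).trans (le_mul_of_one_le_right (abs_nonneg _) hN))
  have hn : (n : ℝ) ^ (2 * M) ≤ Real.exp (4 * N) := by
    refine (pow_le_exp_mul h.pos.le (Real.le_exp_of_log_le h.log_le_add_one) _).trans
      (Real.exp_le_exp.mpr ?_)
    push_cast
    linarith [h.mul_log_le, h.le_cast]
  have hthree : (3 : ℝ) ≤ Real.exp (4 * N) := by linarith [self_le_exp (4 * N)]
  have hroot := factorialRoot_pos r hκ n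
  calc _ ≤ Real.exp (4 * N) * (Real.exp (|Real.log C| * N) * Real.exp (4 * N) /
        Real.exp (𝒩 / r * Real.log N - (2 + |Real.log κ|) * N)) := by
        gcongr
        exact h.le_factorialRoot hr hκ
    _ = _ := by
        simp only [← Real.exp_add, ← Real.exp_sub]
        ring_nf

lemma start_div_le (h : InRange θ N M 𝒩 n t) (hr : 2 ≤ r) : (𝒩 : ℝ) / r ≤ N := by
  rw [div_le_iff₀ (by positivity)]
  exact_mod_cast (h.start_le.trans h.le_two_mul).trans
    ((Nat.mul_le_mul_right N hr).trans_eq (mul_comm _ _))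

lemma mul_le_savings (h : InRange θ N M 𝒩 n t) (hr : 1 ≤ r) {K : ℝ} (hK : 0 ≤ K)
    (hL : 6 * r * K ≤ (1 - 31 * θ) * Real.log N) :
    K * N ≤ 13 / 75 * (1 - 31 * θ) * (𝒩 / r * Real.log N) := by
  have hstart : (N : ℝ) ≤ 𝒩 := by exact_mod_cast h.le_start
  have hL₀ : 0 ≤ (1 - 31 * θ) * Real.log N := le_trans (by positivity) hL
  calc K * N ≤ 13 / 75 * (6 * r * K * (N / r)) := by
        have hcancel : 6 * r * K * (N / r) = 6 * (K * N) := by field_simp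
        rw [hcancel]
        linarith [mul_nonneg hK N.cast_nonneg]
    _ ≤ 13 / 75 * ((1 - 31 * θ) * Real.log N * (𝒩 / r)) := by gcongr
    _ = _ := by ring

lemma prefactor_mul_lt_one (h : InRange θ N M 𝒩 n t) (hr : 2 ≤ r) (hκ : 0 < κ) (hC : 0 < C)
    (hθ : θ < 1 / 31) (hl₁ : (l : ℝ) ≤ 31 / 75 * (𝒩 / r)) (hl₂ : 31 / 75 * ((𝒩 : ℝ) / r) - 1 ≤ l)
    (hL : 6 * r * (44 * (r : ℝ) ^ 2 + 150 + |Real.log κ| + |Real.log C|) ≤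
      (1 - 31 * θ) * Real.log N) :
    ((r ^ 2 * n : ℕ) : ℝ) ^ (2 * l + t * M) *
      (2 * (twistedDerivConst r M ^ t * height r M l * t ! * 2 ^ t) *
        (3 * (factorialRoot r κ n * (2 * 2 ^ M) * (8 * M / n) ^ (5 * l - t) +
          C * (n : ℝ) ^ (2 * M) / factorialRoot r κ n))) < 1 := by
  have hr₁ : 1 ≤ r := by omega
  have hN := h.one_le_cast
  have hlog : 0 ≤ Real.log N := by linarith [h.twenty_le_log]
  have hlN : (l : ℝ) ≤ N := by linarith [h.start_div_le hr]
  have hsave := h.mul_le_savings hr₁ (by positivity) hL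
  have hmain := main_exponent_le (by positivity) hlog hl₂ h.theta_nonneg hθ
  have herror := error_exponent_le hlog hl₁ h.theta_nonneg
  have hCN := mul_nonneg (abs_nonneg (Real.log C)) N.cast_nonneg (α := ℝ)
  have hroot := factorialRoot_pos r hκ n
  have hpre := h.prefactor_le hr₁ hlN
  have hfirst := mul_le_mul hpre (h.main_term_le hr₁ hκ hθ hlN) (by positivity) (by positivity)
  have hsecond := mul_le_mul hpre (h.error_term_le hr₁ hκ hC) (by positivity) (by positivity)
  have hhalf : Real.exp (-1) < 1 / 2 := by linarith [Real.exp_neg_one_lt_d9]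
  rw [← Real.exp_add] at hfirst hsecond
  rw [← mul_assoc, mul_add, mul_add]
  refine (add_lt_add (lt_of_le_of_lt (hfirst.trans (Real.exp_le_exp.mpr ?_)) hhalf)
    (lt_of_le_of_lt (hsecond.trans (Real.exp_le_exp.mpr ?_)) hhalf)).trans_eq (add_halves 1)
  · linarith [Real.log_le_self N.cast_nonneg (x := (N : ℝ))]
  · linarith

lemma isWellApproximable {T : ℕ} (h : InRange θ N M 𝒩 n T) (hr : 2 ≤ r) (hκ : 0 < κ) (hC : 0 < C)
    (hθ : θ < 1 / 31)
    (hL : 6 * r * (44 * (r : ℝ) ^ 2 + 150 + |Real.log κ| + |Real.log C|) ≤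
      (1 - 31 * θ) * Real.log N) {b : Fin 3 → ℕ} {y : Fin 3 → ℤ}
    (hy : ∀ j, |y j - factorialRoot r κ n * evalAt (rootProd r (b j)) (1 / (r ^ 2 * n : ℕ))| ≤
      C * (n : ℝ) ^ (2 * M) / factorialRoot r κ n) :
    IsWellApproximable r M (31 * 𝒩 / (75 * r)) b T n y := by
  have hratio : ((31 * 𝒩 : ℕ) : ℝ) / (75 * r : ℕ) = 31 / 75 * (𝒩 / r) := by
    push_cast
    field_simp
  refine ⟨_, _, (factorialRoot_pos r hκ n).le, hy, fun t ht ↦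
    (h.mono ht).prefactor_mul_lt_one hr hκ hC hθ (hratio ▸ Nat.cast_div_le) ?_ hL⟩
  rw [← hratio, ← Nat.floor_div_eq_div (K := ℝ), sub_le_iff_le_add]
  exact (Nat.lt_floor_add_one _).le

end InRange

end Range

section Counting

variable {θ : ℝ} {N M 𝒩 n r : ℕ}

lemma eventually_large (A : ℝ) (m : ℕ) :
    ∀ᶠ N : ℕ in atTop, A ≤ Real.log N ∧ Real.log N ≤ (N : ℝ) ^ (2 / 5 : ℝ) ∧ m ≤ N := by
  have hlog := (tendsto_natCast_atTop_atTop (R := ℝ)).eventually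
    ((isLittleO_log_rpow_atTop (r := 2 / 5) (by norm_num)).bound one_pos)
  filter_upwards [(Real.tendsto_log_atTop.comp tendsto_natCast_atTop_atTop).eventually_ge_atTop A,
    hlog, eventually_ge_atTop m] with N hA hN hm
  refine ⟨hA, ?_, hm⟩
  rw [one_mul, Real.norm_eq_abs, Real.norm_of_nonneg (by positivity)] at hN
  exact (le_abs_self _).trans hN

lemma pow_mul_log_sq_le (hN : 1 ≤ N) (hlog : Real.log N ≤ (N : ℝ) ^ (2 / 5 : ℝ))
    (hM : (M : ℝ) ≤ (N : ℝ) ^ θ) (hθ : θ ≤ 1 / 20) : (M : ℝ) ^ 4 * Real.log N ^ 2 ≤ N := by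
  have hN₁ : (1 : ℝ) ≤ N := by exact_mod_cast hN
  have hN₀ : (0 : ℝ) < N := by positivity
  calc (M : ℝ) ^ 4 * Real.log N ^ 2
      ≤ ((N : ℝ) ^ (1 / 20 : ℝ)) ^ 4 * ((N : ℝ) ^ (2 / 5 : ℝ)) ^ 2 := by
        gcongr
        exact hM.trans (Real.rpow_le_rpow_of_exponent_le hN₁ hθ)
    _ = (N : ℝ) := by
        rw [← Real.rpow_mul_natCast hN₀.le, ← Real.rpow_mul_natCast hN₀.le, ← Real.rpow_add hN₀]
        norm_num

lemma inRange_of_mem (hlog : 20 ≤ Real.log N) (hlog' : Real.log N ≤ (N : ℝ) ^ (2 / 5 : ℝ))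
    (hM : 2 ≤ M) (hMθ : (M : ℝ) ≤ (N : ℝ) ^ θ) (hθ : θ < 1 / 31) (hN𝒩 : N ≤ 𝒩)
    (hn : n ∈ Ico 𝒩 (𝒩 + ⌊(N : ℝ) / Real.log N⌋₊) ∩ Ico N (2 * N)) :
    InRange θ N M 𝒩 n (⌊3 * ((M : ℝ) ^ 3 * Real.log N)⌋₊ + 2) := by
  rw [mem_inter, mem_Ico, mem_Ico] at hn
  have hN : 1 ≤ N := by omega
  have hM₂ : (2 : ℝ) ≤ M := by exact_mod_cast hM
  refine ⟨hlog, by omega, pow_mul_log_sq_le hN hlog' hMθ (by linarith), ?_, hN𝒩, hn.1.1, ?_,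
    by omega, ?_⟩
  · rw [← Real.log_rpow (by positivity)]
    exact Real.log_le_log (by positivity) hMθ
  · calc (n : ℝ) ≤ 𝒩 + ⌊(N : ℝ) / Real.log N⌋₊ := by exact_mod_cast hn.1.2.le
      _ ≤ 𝒩 + N / Real.log N := by
        gcongr
        exact Nat.floor_le (by positivity)
  · have hM₃ : 2 ≤ (M : ℝ) ^ 3 * Real.log N := by
      calc (2 : ℝ) ≤ 2 ^ 3 * 20 := by norm_num
        _ ≤ (M : ℝ) ^ 3 * Real.log N := by gcongr
    push_cast
    linarith [Nat.floor_le (show 0 ≤ 3 * ((M : ℝ) ^ 3 * Real.log N) by positivity)]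

lemma mul_le_of_le_log (hlog : 75 * (r : ℝ) ≤ Real.log N) (hlog₁ : 1 ≤ Real.log N)
    (hM : (M : ℝ) ^ 4 * Real.log N ^ 2 ≤ N) (hM₁ : 1 ≤ M) : 75 * r * M ≤ N := by
  have hM₁' : (1 : ℝ) ≤ M := by exact_mod_cast hM₁
  have h : 75 * (r : ℝ) * M ≤ N :=
    calc 75 * (r : ℝ) * M ≤ Real.log N ^ 2 * (M : ℝ) ^ 4 := by
          gcongr
          · exact hlog.trans (le_self_pow₀ hlog₁ two_ne_zero)
          · exact le_self_pow₀ hM₁' (by norm_num)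
      _ ≤ N := by rwa [mul_comm]
  exact_mod_cast h

lemma le_div_of_card_mul_le {c : ℕ} {x : ℝ} (hx : 0 < x) (h : c * (⌊3 * x⌋₊ + 1) ≤ 3 * N) :
    (c : ℝ) ≤ N / x := by
  rw [le_div_iff₀ hx]
  have hcast : (c : ℝ) * (⌊3 * x⌋₊ + 1) ≤ 3 * N := by exact_mod_cast h
  have hfloor := mul_le_mul_of_nonneg_left (Nat.lt_floor_add_one (3 * x)).le c.cast_nonneg (α := ℝ)
  linarith

lemma add_one_lt_index (hr : 1 ≤ r) (hM : 2 ≤ M) (h : 75 * r * M ≤ 𝒩) :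
    M + 1 < 31 * 𝒩 / (75 * r) := by
  rw [← Nat.succ_le_iff, Nat.le_div_iff_mul_le (by omega)]
  calc (M + 1 + 1) * (75 * r) ≤ (2 * M) * (75 * r) := by gcongr; omega
    _ = 2 * (75 * r * M) := by ring
    _ ≤ 31 * 𝒩 := by omega

lemma six_mul_index_add_le (hr : 2 ≤ r) (h𝒩 : 𝒩 ≤ 2 * N) (hM : 8 * M ≤ N) :
    6 * (31 * 𝒩 / (75 * r)) + 3 * M ≤ 3 * N := by
  have hindex : 31 * 𝒩 / (75 * r) ≤ 31 * 𝒩 / 150 := Nat.div_le_div_left (by omega) (by omega)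
  omega

variable {P : ℤ[X]} {s : ℤ}

lemma exists_isWellApproximable (hr : 2 ≤ P.natDegree) (hcoeff : P.coeff (P.natDegree - 1) = 0)
    (hs : s ≠ 0) (hθ : θ < 1 / 31) :
    ∃ N₀ : ℕ, ∀ N ≥ N₀, ∀ M : ℕ, 2 ≤ M → (M : ℝ) ≤ (N : ℝ) ^ θ →
      20 ≤ Real.log N ∧ 75 * P.natDegree * M ≤ N ∧
      ∀ b : Fin 3 → ℕ, (∀ j, b j ≤ M) → (∀ j, P.natDegree ∣ b j) → ∀ 𝒩 ≥ N,
        ∀ n ∈ Ico 𝒩 (𝒩 + ⌊(N : ℝ) / Real.log N⌋₊) ∩ Ico N (2 * N),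
        (∀ j, ∃ x : ℤ, s * ((n - b j)! : ℤ) = P.eval x) →
        ∃ y ≠ 0, IsWellApproximable P.natDegree M (31 * 𝒩 / (75 * P.natDegree)) b
          (⌊3 * ((M : ℝ) ^ 3 * Real.log N)⌋₊ + 2) n y := by
  have hP : P ≠ 0 := ne_zero_of_natDegree_gt hr
  have hC : (0 : ℝ) < 2 * coeffAbsSum P :=
    mul_pos two_pos (by exact_mod_cast (one_le_coeffAbsSum hP).trans_lt' zero_lt_one)
  obtain ⟨m₀, happrox⟩ := exists_approximations hr hcoeff hs
  obtain ⟨A, hA⟩ : ∃ A : ℝ, ∀ L : ℝ, A ≤ L → 20 ≤ L ∧ 75 * (P.natDegree : ℝ) ≤ L ∧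
      6 * P.natDegree * (44 * (P.natDegree : ℝ) ^ 2 + 150 + |Real.log (solutionConst P s)| +
        |Real.log (2 * coeffAbsSum P)|) ≤ (1 - 31 * θ) * L := by
    simp_rw [← div_le_iff₀' (show 0 < 1 - 31 * θ by linarith), ← max_le_iff]
    exact ⟨_, fun _ h ↦ h⟩
  obtain ⟨N₀, hN₀⟩ := eventually_atTop.mp (eventually_large A (2 * m₀ + 1))
  refine ⟨N₀, fun N hN M hM hMθ ↦ ?_⟩
  obtain ⟨hlog, hlog', hm₀⟩ := hN₀ N hN
  obtain ⟨h20, h75, hL⟩ := hA _ hlog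
  have hrM : 75 * P.natDegree * M ≤ N := mul_le_of_le_log h75 (by linarith)
    (pow_mul_log_sq_le (by omega) hlog' hMθ (by linarith)) (by omega)
  have hMN : 150 * M ≤ N := le_trans (Nat.mul_le_mul_right M (by omega)) hrM
  refine ⟨h20, hrM, fun b hbM hdvd 𝒩 hN𝒩 n hn hsol ↦ ?_⟩
  have hNn : N ≤ n := (mem_Ico.mp (mem_inter.mp hn).2).1
  obtain ⟨y, hy, hbound⟩ := happrox n M b (by omega) (by omega) (by omega) hbM hdvd hsol
  exact ⟨y, hy, (inRange_of_mem h20 hlog' hM hMθ hθ hN𝒩 hn).isWellApproximable hr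
    (solutionConst_pos hP hs) hC hθ hL hbound⟩

lemma card_solutions_le (hr : 2 ≤ P.natDegree) (hcoeff : P.coeff (P.natDegree - 1) = 0)
    (hs : s ≠ 0) (hθ : θ < 1 / 31) :
    ∃ N₀ : ℕ, ∀ N ≥ N₀, ∀ M : ℕ, (M : ℝ) ≤ (N : ℝ) ^ θ →
      ∀ b : Fin 3 → ℕ, StrictMono b → 2 ≤ b 1 → (∀ j, b j ≤ M) → (∀ j, P.natDegree ∣ b j) →
      ∀ 𝒩 ≥ N, 𝒩 ≤ 2 * N →
      (#{n ∈ Ico 𝒩 (𝒩 + ⌊(N : ℝ) / Real.log N⌋₊) ∩ Ico N (2 * N) |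
        ∀ j, ∃ x : ℤ, s * ((n - b j)! : ℤ) = P.eval x} : ℝ) ≤
        N / ((M : ℝ) ^ 3 * Real.log N) := by
  obtain ⟨N₀, hN₀⟩ := exists_isWellApproximable hr hcoeff hs hθ
  refine ⟨N₀, fun N hN M hMθ b hb hb₁ hbM hdvd 𝒩 hN𝒩 h𝒩 ↦ ?_⟩
  have hM : 2 ≤ M := hb₁.trans (hbM 1)
  obtain ⟨hlog, hrM, happrox⟩ := hN₀ N hN M hM hMθ
  have hMN : 150 * M ≤ N := le_trans (Nat.mul_le_mul_right M (by omega)) hrM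
  have hM₀ : (0 : ℝ) < (M : ℝ) ^ 3 * Real.log N := by positivity
  refine le_div_of_card_mul_le hM₀ ((card_mul_le_of_isWellApproximable hr hb hb₁ hbM
    (add_one_lt_index (by omega) hM (hrM.trans hN𝒩)) fun n hn ↦ ?_).trans
    (six_mul_index_add_le hr h𝒩 (by omega)))
  obtain ⟨hmem, hsol⟩ := mem_filter.mp hn
  have hNn : N ≤ n := (mem_Ico.mp (mem_inter.mp hmem).2).1
  exact ⟨by omega, happrox b hbM hdvd 𝒩 hN𝒩 n hmem hsol⟩

end Counting

end SmallDifference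

open SmallDifference Finset in
theorem few_solutions_with_small_difference_general (P : Polynomial ℤ) (hr : 2 ≤ P.natDegree)
    (hcoeff : P.coeff (P.natDegree - 1) = 0) (s : ℤ) (hs : s ≠ 0) {θ : ℝ} (hθ : θ < 1 / 31) :
    ∃ N₀ : ℕ, ∀ N : ℕ, N₀ ≤ N → ∀ M : ℕ, (M : ℝ) ≤ (N : ℝ) ^ θ →
      ∀ β₁ β₂ : ℕ, P.natDegree ∣ β₁ → P.natDegree ∣ β₂ → 0 < β₁ → β₁ < β₂ → β₂ ≤ M →
      ∀ 𝒩 : ℕ, N ≤ 𝒩 → 𝒩 ≤ 2 * N →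
      (#{n ∈ Ico 𝒩 (𝒩 + ⌊(N : ℝ) / Real.log N⌋₊) ∩ Ico N (2 * N) | ∃ x x₁ x₂ : ℤ,
          s * (n ! : ℤ) = P.eval x ∧ s * ((n - β₁)! : ℤ) = P.eval x₁ ∧
            s * ((n - β₂)! : ℤ) = P.eval x₂} : ℝ) ≤ N / ((M : ℝ) ^ 3 * Real.log N) := by
  obtain ⟨N₀, hN₀⟩ := card_solutions_le hr hcoeff hs hθ
  refine ⟨N₀, fun N hN M hMθ β₁ β₂ hd₁ hd₂ hβ₁ hβ hβM 𝒩 hN𝒩 h𝒩 ↦ ?_⟩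
  have hrβ : P.natDegree ≤ β₁ := Nat.le_of_dvd hβ₁ hd₁
  have hcard := hN₀ N hN M hMθ ![0, β₁, β₂]
    (by simp [hβ₁, hβ]) (show 2 ≤ β₁ by omega)
    (by simp [Fin.forall_fin_succ, hβM, hβ.le.trans hβM]) (by simp [Fin.forall_fin_succ, hd₁, hd₂])
    𝒩 hN𝒩 h𝒩
  simpa [Fin.forall_fin_succ] using hcard

/-- **Few solutions with small difference** (Proposition 3.2).
Let `P ∈ ℤ[x]` have degree `r ≥ 2` with the coefficient of `x^(r−1)` equal to zero, and let
`s ≠ 0` be an integer. For every sufficiently small `ε > 0` there exists `N₀` such that for all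
`N ≥ N₀`: with `θ ∈ [1/1000, 1/20]`, `θ ≤ 17 − 12√2 − ε`, `M = ⌊N^θ⌋`, `β₁ < β₂` positive
multiples of `r` with `r ≤ β₁ < β₂ ≤ M`, and `𝒩 ∈ [N, 2N)`, the number of `n` in
`[𝒩, 𝒩 + ⌊N/log N⌋) ∩ [N, 2N)` with `s·n! = P(x)`, `s·(n−β₁)! = P(x₁)`, `s·(n−β₂)! = P(x₂)`
solvable in integers is at most `N/(M³·log N)`. -/
theorem few_solutions_with_small_difference
    (P : Polynomial ℤ) (r : ℕ) (hr : 2 ≤ r) (hdeg : P.natDegree = r)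
    (hcoeff : P.coeff (r - 1) = 0) (s : ℤ) (hs : s ≠ 0) :
    ∃ ε₁ : ℝ, 0 < ε₁ ∧ ∀ ε : ℝ, 0 < ε → ε ≤ ε₁ →
      ∃ N₀ : ℕ, ∀ N : ℕ, N₀ ≤ N →
        ∀ θ : ℝ, 1 / 1000 ≤ θ → θ ≤ 1 / 20 → θ ≤ 17 - 12 * Real.sqrt 2 - ε →
        ∀ M : ℕ, M = ⌊(N : ℝ) ^ θ⌋₊ →
        ∀ β₁ β₂ : ℕ, r ∣ β₁ → r ∣ β₂ → r ≤ β₁ → β₁ < β₂ → β₂ ≤ M →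
        ∀ 𝒩 : ℕ, N ≤ 𝒩 → 𝒩 < 2 * N →
        ((((Finset.Ico 𝒩 (𝒩 + ⌊(N : ℝ) / Real.log N⌋₊)) ∩ (Finset.Ico N (2 * N))).filter
            (fun n => ∃ x x₁ x₂ : ℤ,
              s * (n ! : ℤ) = P.eval x ∧
              s * ((n - β₁)! : ℤ) = P.eval x₁ ∧
              s * ((n - β₂)! : ℤ) = P.eval x₂)).card : ℝ)
          ≤ (N : ℝ) / ((M : ℝ) ^ 3 * Real.log N) := by
  subst hdeg
  have hsqrt : 1.4142 ≤ √2 := Real.le_sqrt_of_sq_le (by norm_num)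
  refine ⟨1, one_pos, fun ε hε _ ↦ ?_⟩
  obtain ⟨N₀, hN₀⟩ := few_solutions_with_small_difference_general P hr hcoeff s hs
    (θ := 17 - 12 * √2 - ε) (by linarith)
  refine ⟨max N₀ 1, fun N hN θ _ _ hθ M hM β₁ β₂ hd₁ hd₂ hβ₁ hβ hβM 𝒩 hN𝒩 h𝒩 ↦ ?_⟩
  have hN₁ : (1 : ℝ) ≤ N := by exact_mod_cast (le_max_right _ _).trans hN
  refine hN₀ N ((le_max_left _ _).trans hN) M ?_ β₁ β₂ hd₁ hd₂ (by omega) hβ hβM 𝒩 hN𝒩 h𝒩.le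
  exact hM ▸ (Nat.floor_le (by positivity)).trans (Real.rpow_le_rpow_of_exponent_le hN₁ hθ)
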